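/- arXiv:2506.01660 — 2 statements merged into one kernel-verified Lean document; each statement's English description precedes it below -/
import Mathlib

section
/- For every a ∈ (0, π/2) and all x, y ∈ S² such that the spherical caps B(x,a) and B(y,a) are disjoint, one has (1/σ(B(x,a))²)·∫_{B(x,a)}∫_{B(y,a)} log(1/|u − v|) dσ(u)dσ(v) = log(1/|x − y|) + 1 + 2·cot²(a/2)·log cos(a/2). -/
open MeasureTheory Real Filter Set

noncomputable section

/-- Euclidean 3-space. -/
abbrev E3 : Type := EuclideanSpace ℝ (Fin 3)

/-- The unit sphere `S²` = {x ∈ ℝ³ : |x| = 1}. -/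
abbrev S2 : Type := Metric.sphere (0 : E3) 1

/-- Surface measure on `S²`. -/
noncomputable def surf : Measure S2 := (volume : Measure E3).toSphere

/-- The normalized surface (uniform probability) measure `σ` on `S²`. -/
noncomputable def sigma2 : Measure S2 := (surf Set.univ)⁻¹ • surf

instance : IsFiniteMeasure sigma2 := by
  constructor
  rw [sigma2]
  simp only [Measure.smul_apply, smul_eq_mul]
  exact lt_of_le_of_lt (ENNReal.inv_mul_le_one _) ENNReal.one_lt_top

/-- The geodesic (great-circle) distance on `S²`. -/
noncomputable def dg (x y : S2) : ℝ := Real.arccos (inner (𝕜 := ℝ) (x : E3) (y : E3))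

/-- The spherical cap `B(x,a) = {y ∈ S² : d_g(x,y) ≤ a}`. -/
def cap (x : S2) (a : ℝ) : Set S2 := {y | dg x y ≤ a}

/-!
Place the pole at the centre `x` of a cap. The cone over a subset of the sphere, integrated in
spherical coordinates, gives the surface measure the density `sin θ` in colatitude `θ` and
longitude `φ`. If `v` has larger colatitude than `u(θ, φ)`, then
`|u(θ, φ) - v|² = (1 + cos θ) (1 - ⟨x, v⟩) |exp(iφ) - ζ|²` for some `ζ` with `|ζ| < 1` independent
of `φ`, and the circle average of `log |· - ζ|` vanishes. Since `|x - v|² = 2 (1 - ⟨x, v⟩)`, what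
remains is an elementary integral over `θ`, and outside the cap its logarithmic potential is that of
a point mass at `x` up to a constant. Integrating this potential over the other cap and applying the
same fact to that cap gives the mutual energy, whatever the two radii.
-/

/-- Cylindrical coordinates `(height, horizontal part)` on Euclidean 3-space, the horizontal plane
being identified with `ℂ`. -/
abbrev Cyl3 : Type := WithLp 2 (ℝ × ℂ)

lemma exists_linearIsometryEquiv_apply_eq {E F : Type*}
    [NormedAddCommGroup E] [InnerProductSpace ℝ E] [FiniteDimensional ℝ E]
    [NormedAddCommGroup F] [InnerProductSpace ℝ F] [FiniteDimensional ℝ F]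
    (hdim : Module.finrank ℝ E = Module.finrank ℝ F) {x : E} {y : F} (hxy : ‖x‖ = ‖y‖) :
    ∃ L : E ≃ₗᵢ[ℝ] F, L x = y := by
  let L := (stdOrthonormalBasis ℝ E).equiv (stdOrthonormalBasis ℝ F) (finCongr hdim)
  have hL : ‖L x‖ = ‖y‖ := (L.norm_map x).trans hxy
  exact ⟨L.trans (ℝ ∙ (L x - y))ᗮ.reflection, Submodule.reflection_sub hL⟩

lemma exists_axis_isometry (x : S2) : ∃ L : E3 ≃ₗᵢ[ℝ] Cyl3, L x = WithLp.toLp 2 (1, 0) := by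
  refine exists_linearIsometryEquiv_apply_eq ?_ (by simp)
  rw [(WithLp.linearEquiv 2 ℝ (ℝ × ℂ)).finrank_eq]
  simp

lemma lintegral_complex_polar (f : ℂ → ENNReal) (hf : Measurable f) :
    ∫⁻ w, f w =
      ∫⁻ r in Ioi (0 : ℝ), ∫⁻ φ in Ioo (-π) π, ENNReal.ofReal r * f (circleMap 0 r φ) := by
  have hsymm (p : ℝ × ℝ) : Complex.polarCoord.symm p = circleMap 0 p.1 p.2 := by
    rw [Complex.polarCoord_symm_apply, circleMap_zero, Complex.exp_mul_I, Complex.ofReal_cos,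
      Complex.ofReal_sin]
  rw [← Complex.lintegral_comp_polarCoord_symm, polarCoord_target, Measure.volume_eq_prod]
  simp only [hsymm, smul_eq_mul]
  refine setLIntegral_prod _ (Measurable.aemeasurable ?_)
  unfold circleMap
  fun_prop

lemma lintegral_upper_half_plane_polar (f : ℝ × ℝ → ENNReal) (hf : Measurable f) :
    ∫⁻ z, ∫⁻ r in Ioi (0 : ℝ), f (z, r) =
      ∫⁻ s in Ioi (0 : ℝ), ∫⁻ θ in Ioo 0 π, ENNReal.ofReal s * f (s * cos θ, s * sin θ) := by
  have hupper : MeasurableSet (univ ×ˢ Ioi 0 : Set (ℝ × ℝ)) :=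
    MeasurableSet.univ.prod measurableSet_Ioi
  have hsin {s θ : ℝ} (hs : 0 < s) (hθ : θ ∈ Ioo (-π) π) : 0 < s * sin θ ↔ θ ∈ Ioo 0 π := by
    rw [mul_pos_iff_of_pos_left hs]
    refine ⟨fun h ↦ ⟨?_, hθ.2⟩, sin_pos_of_mem_Ioo⟩
    exact not_le.1 fun h0 ↦ h.not_ge (sin_nonpos_of_nonpos_of_neg_pi_le h0 hθ.1.le)
  calc ∫⁻ z, ∫⁻ r in Ioi (0 : ℝ), f (z, r)
      = ∫⁻ q in univ ×ˢ Ioi 0, f q := by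
        rw [Measure.volume_eq_prod, setLIntegral_prod _ hf.aemeasurable, Measure.restrict_univ]
    _ = ∫⁻ q, (univ ×ˢ Ioi 0).indicator f q := (lintegral_indicator hupper f).symm
    _ = ∫⁻ s in Ioi (0 : ℝ), ∫⁻ θ in Ioo (-π) π,
          ENNReal.ofReal s * (univ ×ˢ Ioi 0).indicator f (s * cos θ, s * sin θ) := by
        rw [← lintegral_comp_polarCoord_symm, polarCoord_target, Measure.volume_eq_prod]
        refine setLIntegral_prod _ (Measurable.aemeasurable ?_)
        have := hf.indicator hupper
        have := continuous_polarCoord_symm.measurable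
        fun_prop
    _ = ∫⁻ s in Ioi (0 : ℝ), ∫⁻ θ in Ioo (-π) π, (Ioo 0 π).indicator
          (fun θ ↦ ENNReal.ofReal s * f (s * cos θ, s * sin θ)) θ := by
        refine setLIntegral_congr_fun measurableSet_Ioi fun s hs ↦ ?_
        refine setLIntegral_congr_fun measurableSet_Ioo fun θ hθ ↦ ?_
        simp [indicator_apply, ← hsin hs hθ]
    _ = _ := by
        simp only [setLIntegral_indicator measurableSet_Ioo]
        rw [inter_eq_self_of_subset_left (Ioo_subset_Ioo_left (neg_nonpos.2 pi_pos.le))]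

lemma lintegral_spherical (f : ℝ × ℂ → ENNReal) (hf : Measurable f) :
    ∫⁻ q, f q = ∫⁻ s in Ioi (0 : ℝ), ∫⁻ p in Ioo 0 π ×ˢ Ioo (-π) π,
      ENNReal.ofReal (s ^ 2 * sin p.1) * f (s * cos p.1, circleMap 0 (s * sin p.1) p.2) := by
  let g (p : ℝ × ℝ) : ENNReal :=
    ∫⁻ φ in Ioo (-π) π, ENNReal.ofReal p.2 * f (p.1, circleMap 0 p.2 φ)
  have hg : Measurable g := by
    refine Measurable.lintegral_prod_right' (f := fun q : (ℝ × ℝ) × ℝ ↦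
      ENNReal.ofReal q.1.2 * f (q.1.1, circleMap 0 q.1.2 q.2)) ?_
    unfold circleMap
    fun_prop
  calc ∫⁻ q, f q
      = ∫⁻ z, ∫⁻ r in Ioi (0 : ℝ), g (z, r) := by
        rw [Measure.volume_eq_prod, lintegral_prod _ hf.aemeasurable]
        exact lintegral_congr fun z ↦ lintegral_complex_polar _ (by fun_prop)
    _ = ∫⁻ s in Ioi (0 : ℝ), ∫⁻ θ in Ioo 0 π, ENNReal.ofReal s * g (s * cos θ, s * sin θ) :=
        lintegral_upper_half_plane_polar g hg
    _ = _ := by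
        refine setLIntegral_congr_fun measurableSet_Ioi fun s (hs : 0 < s) ↦ ?_
        have hmeas : Measurable fun p : ℝ × ℝ ↦ ENNReal.ofReal (s ^ 2 * sin p.1) *
            f (s * cos p.1, circleMap 0 (s * sin p.1) p.2) := by
          unfold circleMap
          fun_prop
        rw [Measure.volume_eq_prod, setLIntegral_prod _ hmeas.aemeasurable]
        refine lintegral_congr fun θ ↦ ?_
        rw [← lintegral_const_mul' _ _ ENNReal.ofReal_ne_top]
        refine lintegral_congr fun φ ↦ ?_
        rw [← mul_assoc, ← ENNReal.ofReal_mul hs.le]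
        ring_nf

/-- The point of the sphere with colatitude `p.1` and longitude `p.2` in the cylindrical coordinates
`L`. -/
def sphericalPoint (L : E3 ≃ₗᵢ[ℝ] Cyl3) (p : ℝ × ℝ) : S2 :=
  ⟨L.symm (WithLp.toLp 2 (cos p.1, circleMap 0 (sin p.1) p.2)), by
    simp [WithLp.prod_norm_eq_of_L2]⟩

lemma continuous_sphericalPoint (L : E3 ≃ₗᵢ[ℝ] Cyl3) : Continuous (sphericalPoint L) := by
  refine Continuous.subtype_mk (L.symm.continuous.comp ?_) _
  unfold circleMap
  fun_prop

lemma smul_sphericalPoint (L : E3 ≃ₗᵢ[ℝ] Cyl3) (s : ℝ) (p : ℝ × ℝ) :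
    s • (sphericalPoint L p : E3) =
      L.symm (WithLp.toLp 2 (s * cos p.1, circleMap 0 (s * sin p.1) p.2)) := by
  rw [sphericalPoint, ← L.symm.map_smul, ← WithLp.toLp_smul, Prod.smul_mk, circleMap_zero,
    circleMap_zero]
  congr 3
  simp [mul_assoc]

lemma measurePreserving_axis_isometry (L : E3 ≃ₗᵢ[ℝ] Cyl3) :
    MeasurePreserving fun q : ℝ × ℂ ↦ L.symm (WithLp.toLp 2 q) :=
  L.symm.measurePreserving.comp
    (WithLp.volume_preserving_symm_measurableEquiv_toLp_prod ℝ ℂ).symm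

section Cone

open scoped Pointwise

variable {E : Type*} [NormedAddCommGroup E] [NormedSpace ℝ E] {A : Set (Metric.sphere (0 : E) 1)}

lemma mem_Ioo_smul_image_coe_iff {p : E} :
    p ∈ Ioo (0 : ℝ) 1 • ((↑) '' A : Set E) ↔ ‖p‖ ∈ Ioo 0 1 ∧ ‖p‖⁻¹ • p ∈ ((↑) '' A : Set E) := by
  constructor
  · rintro ⟨r, hr, _, ⟨u, hu, rfl⟩, rfl⟩
    have hnorm : ‖r • (u : E)‖ = r := by simp [norm_smul, abs_of_pos hr.1]
    change ‖r • (u : E)‖ ∈ _ ∧ ‖r • (u : E)‖⁻¹ • r • (u : E) ∈ _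
    rw [hnorm, inv_smul_smul₀ hr.1.ne']
    exact ⟨hr, mem_image_of_mem _ hu⟩
  · exact fun ⟨hp, hA⟩ ↦ ⟨‖p‖, hp, _, hA, smul_inv_smul₀ hp.1.ne' p⟩

lemma smul_mem_Ioo_smul_image_coe_iff {s : ℝ} (hs : 0 < s) {u : Metric.sphere (0 : E) 1} :
    s • (u : E) ∈ Ioo (0 : ℝ) 1 • ((↑) '' A : Set E) ↔ s < 1 ∧ u ∈ A := by
  have hnorm : ‖s • (u : E)‖ = s := by simp [norm_smul, abs_of_pos hs]
  rw [mem_Ioo_smul_image_coe_iff, hnorm, inv_smul_smul₀ hs.ne', mem_Ioo, and_iff_right hs,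
    Subtype.val_injective.mem_set_image]

lemma measurableSet_Ioo_smul_image_coe [MeasurableSpace E] [BorelSpace E]
    [SecondCountableTopology E] (hA : MeasurableSet A) :
    MeasurableSet (Ioo (0 : ℝ) 1 • ((↑) '' A : Set E)) := by
  have himage : MeasurableSet ((↑) '' A : Set E) :=
    Metric.isClosed_sphere.measurableSet.subtype_image hA
  have hnormalize : Measurable fun p : E ↦ ‖p‖⁻¹ • p := by fun_prop
  have hcone : Ioo (0 : ℝ) 1 • ((↑) '' A : Set E) =
      norm ⁻¹' Ioo 0 1 ∩ (fun p ↦ ‖p‖⁻¹ • p) ⁻¹' ((↑) '' A) :=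
    Set.ext fun _ ↦ mem_Ioo_smul_image_coe_iff
  rw [hcone]
  exact (measurable_norm measurableSet_Ioo).inter (hnormalize himage)

end Cone

lemma lintegral_sq_Ioo_zero_one :
    ∫⁻ s in Ioo (0 : ℝ) 1, ENNReal.ofReal (s ^ 2) = ENNReal.ofReal (1 / 3) := by
  rw [← ofReal_integral_eq_lintegral_ofReal
      ((Continuous.integrableOn_Icc (by fun_prop)).mono_set Ioo_subset_Icc_self)
      (ae_of_all _ fun s ↦ sq_nonneg s),
    ← integral_Ioc_eq_integral_Ioo, ← intervalIntegral.integral_of_le zero_le_one, integral_pow]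
  norm_num

open scoped Pointwise in
/-- The part inside the open unit ball of the cone over `A ⊆ S²`, in the cylindrical coordinates
`L`. Its volume is a third of the surface measure of `A`. -/
def solidCone (L : E3 ≃ₗᵢ[ℝ] Cyl3) (A : Set S2) : Set (ℝ × ℂ) :=
  (fun q ↦ L.symm (WithLp.toLp 2 q)) ⁻¹' (Ioo (0 : ℝ) 1 • ((↑) '' A))

lemma measurableSet_solidCone (L : E3 ≃ₗᵢ[ℝ] Cyl3) {A : Set S2} (hA : MeasurableSet A) :
    MeasurableSet (solidCone L A) :=
  (measurePreserving_axis_isometry L).measurable (measurableSet_Ioo_smul_image_coe hA)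

lemma surf_eq_three_mul_volume_solidCone (L : E3 ≃ₗᵢ[ℝ] Cyl3) {A : Set S2} (hA : MeasurableSet A) :
    surf A = 3 * volume (solidCone L A) := by
  rw [solidCone, (measurePreserving_axis_isometry L).measure_preimage
    (measurableSet_Ioo_smul_image_coe hA).nullMeasurableSet, surf, Measure.toSphere_apply' _ hA]
  simp

lemma spherical_mem_solidCone_iff (L : E3 ≃ₗᵢ[ℝ] Cyl3) {A : Set S2} {s : ℝ} (hs : 0 < s)
    (p : ℝ × ℝ) : (s * cos p.1, circleMap 0 (s * sin p.1) p.2) ∈ solidCone L A ↔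
      s < 1 ∧ sphericalPoint L p ∈ A := by
  rw [solidCone, mem_preimage, ← smul_sphericalPoint, smul_mem_Ioo_smul_image_coe_iff hs]

lemma volume_solidCone (L : E3 ≃ₗᵢ[ℝ] Cyl3) {A : Set S2} (hA : MeasurableSet A) :
    volume (solidCone L A) = ENNReal.ofReal (1 / 3) * ∫⁻ p in Ioo 0 π ×ˢ Ioo (-π) π,
      (sphericalPoint L ⁻¹' A).indicator (fun p ↦ ENNReal.ofReal (sin p.1)) p := by
  classical
  set m := ∫⁻ p in Ioo 0 π ×ˢ Ioo (-π) π,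
    (sphericalPoint L ⁻¹' A).indicator (fun p ↦ ENNReal.ofReal (sin p.1)) p
  have hcone := measurableSet_solidCone L hA
  have hfactor : ∀ s ∈ Ioi (0 : ℝ), ∫⁻ p in Ioo 0 π ×ˢ Ioo (-π) π,
      ENNReal.ofReal (s ^ 2 * sin p.1) *
        (solidCone L A).indicator 1 (s * cos p.1, circleMap 0 (s * sin p.1) p.2) =
      (Iio 1).indicator (fun s ↦ ENNReal.ofReal (s ^ 2) * m) s := by
    intro s hs
    have hmem := spherical_mem_solidCone_iff (A := A) L hs
    by_cases hs1 : s < 1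
    · rw [indicator_of_mem (mem_Iio.2 hs1), ← lintegral_const_mul' _ _ ENNReal.ofReal_ne_top]
      refine lintegral_congr fun p ↦ ?_
      simp [indicator_apply, hmem, hs1, ENNReal.ofReal_mul (sq_nonneg s)]
    · simp [hmem, hs1]
  rw [← lintegral_indicator_one hcone, lintegral_spherical _ (measurable_one.indicator hcone),
    setLIntegral_congr_fun measurableSet_Ioi hfactor, setLIntegral_indicator measurableSet_Iio,
    inter_comm, Ioi_inter_Iio, lintegral_mul_const _ (by fun_prop), lintegral_sq_Ioo_zero_one]

lemma surf_eq_map_sphericalPoint (L : E3 ≃ₗᵢ[ℝ] Cyl3) :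
    surf = ((volume.restrict (Ioo 0 π ×ˢ Ioo (-π) π)).withDensity
      fun p ↦ ENNReal.ofReal (sin p.1)).map (sphericalPoint L) := by
  have hΓ : Measurable (sphericalPoint L) := (continuous_sphericalPoint L).measurable
  ext A hA
  have h3 : (3 : ENNReal) * ENNReal.ofReal (1 / 3) = 1 := by
    rw [← ENNReal.ofReal_ofNat, ← ENNReal.ofReal_mul (by norm_num)]
    norm_num
  rw [Measure.map_apply hΓ hA, withDensity_apply _ (hΓ hA), ← lintegral_indicator (hΓ hA),
    surf_eq_three_mul_volume_solidCone L hA, volume_solidCone L hA, ← mul_assoc, h3, one_mul]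

lemma integral_surf (L : E3 ≃ₗᵢ[ℝ] Cyl3) {f : S2 → ℝ} (hf : Integrable f surf) :
    ∫ u, f u ∂surf =
      ∫ θ in 0..π, sin θ * ∫ φ in -π..π, f (sphericalPoint L (θ, φ)) := by
  have hΓ : AEMeasurable (sphericalPoint L)
      ((volume.restrict (Ioo 0 π ×ˢ Ioo (-π) π)).withDensity fun p ↦ ENNReal.ofReal (sin p.1)) :=
    (continuous_sphericalPoint L).aemeasurable
  have hdensity : Measurable fun p : ℝ × ℝ ↦ ENNReal.ofReal (sin p.1) := by fun_prop
  have htop (μ : Measure (ℝ × ℝ)) : ∀ᵐ p ∂μ, ENNReal.ofReal (sin p.1) < ⊤ :=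
    ae_of_all _ fun _ ↦ ENNReal.ofReal_lt_top
  rw [surf_eq_map_sphericalPoint L] at hf ⊢
  rw [integral_map hΓ hf.aestronglyMeasurable,
    integral_withDensity_eq_integral_toReal_smul hdensity (htop _), Measure.volume_eq_prod]
  rw [integrable_map_measure hf.aestronglyMeasurable hΓ,
    integrable_withDensity_iff_integrable_smul' hdensity (htop _), Measure.volume_eq_prod] at hf
  rw [setIntegral_prod (fun p ↦ (ENNReal.ofReal (sin p.1)).toReal • f (sphericalPoint L p)) hf,
    intervalIntegral.integral_of_le pi_pos.le, integral_Ioc_eq_integral_Ioo]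
  refine setIntegral_congr_fun measurableSet_Ioo fun θ hθ ↦ ?_
  have hsin : 0 ≤ sin θ := (sin_pos_of_mem_Ioo hθ).le
  simp only [ENNReal.toReal_ofReal hsin, smul_eq_mul, integral_const_mul,
    intervalIntegral.integral_of_le (neg_le_self pi_pos.le), integral_Ioc_eq_integral_Ioo]

lemma surf_univ : surf univ = ENNReal.ofReal (4 * π) := by
  rw [surf, Measure.toSphere_apply_univ, EuclideanSpace.volume_ball_fin_three,
    finrank_euclideanSpace, Fintype.card_fin, ENNReal.ofReal_one, one_pow, one_mul,
    ← ENNReal.ofReal_natCast, ← ENNReal.ofReal_mul (Nat.cast_nonneg 3)]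
  congr 1
  push_cast
  ring

lemma integral_sigma2 (L : E3 ≃ₗᵢ[ℝ] Cyl3) {f : S2 → ℝ} (hf : Integrable f sigma2) :
    ∫ u, f u ∂sigma2 =
      (4 * π)⁻¹ * ∫ θ in 0..π, sin θ * ∫ φ in -π..π, f (sphericalPoint L (θ, φ)) := by
  have h4pi : 0 < 4 * π := by positivity
  rw [sigma2, surf_univ] at hf ⊢
  rw [integrable_smul_measure (ENNReal.inv_ne_zero.2 ENNReal.ofReal_ne_top)
    (ENNReal.inv_ne_top.2 (ENNReal.ofReal_pos.2 h4pi).ne')] at hf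
  rw [integral_smul_measure, integral_surf L hf, ENNReal.toReal_inv,
    ENNReal.toReal_ofReal h4pi.le, smul_eq_mul]

lemma continuous_dg (x : S2) : Continuous (dg x) := by
  unfold dg
  fun_prop

lemma isClosed_cap (x : S2) (a : ℝ) : IsClosed (cap x a) :=
  isClosed_le (continuous_dg x) continuous_const

lemma self_mem_cap (x : S2) {a : ℝ} (ha : 0 ≤ a) : x ∈ cap x a := by
  simpa [cap, dg] using ha

lemma inner_mem_Icc (x v : S2) : inner ℝ (x : E3) (v : E3) ∈ Icc (-1) 1 := by
  rw [mem_Icc, ← abs_le]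
  simpa using abs_real_inner_le_norm (x : E3) (v : E3)

lemma inner_lt_cos_of_notMem_cap {x v : S2} {a : ℝ} (ha : 0 ≤ a) (hv : v ∉ cap x a) :
    inner ℝ (x : E3) (v : E3) < cos a := by
  have h := cos_lt_cos_of_nonneg_of_le_pi ha (arccos_le_pi _) (not_le.1 hv)
  rwa [cos_arccos (inner_mem_Icc x v).1 (inner_mem_Icc x v).2] at h

lemma log_dist_eq {x v : S2} (hxv : x ≠ v) :
    log (dist x v) = (log 2 + log (1 - inner ℝ (x : E3) (v : E3))) / 2 := by
  have hsq : dist x v ^ 2 = 2 * (1 - inner ℝ (x : E3) (v : E3)) := by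
    rw [Subtype.dist_eq, dist_eq_norm, norm_sub_sq_real, norm_eq_of_mem_sphere,
      norm_eq_of_mem_sphere]
    ring
  have hne : 1 - inner ℝ (x : E3) (v : E3) ≠ 0 := fun h ↦ by
    rw [h, mul_zero] at hsq
    exact dist_ne_zero.2 hxv (pow_eq_zero_iff two_ne_zero |>.1 hsq)
  rw [← log_mul two_ne_zero hne, ← hsq, log_pow]
  push_cast
  ring

lemma integral_log_norm_circleMap_sub {ζ : ℂ} (hζ : ‖ζ‖ < 1) :
    ∫ φ in -π..π, log ‖circleMap 0 1 φ - ζ‖ = 0 := by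
  have havg := circleAverage_log_norm_sub_const₀ hζ
  rw [circleAverage_eq_integral_add (-π),
    intervalIntegral.integral_comp_add_right (fun φ ↦ log ‖circleMap 0 1 φ - ζ‖), zero_add,
    show 2 * π + -π = π by ring] at havg
  simpa [pi_ne_zero] using havg

lemma sq_sub_add_norm_smul_sub_sq {F : Type*} [NormedAddCommGroup F] [InnerProductSpace ℝ F]
    {e w : F} {r s t : ℝ} (he : ‖e‖ = 1) (ht : t ^ 2 + r ^ 2 = 1) (hs : s ^ 2 + ‖w‖ ^ 2 = 1)
    (ht1 : 1 + t ≠ 0) (hs1 : 1 - s ≠ 0) :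
    (t - s) ^ 2 + ‖r • e - w‖ ^ 2 =
      (1 + t) * (1 - s) * ‖e - (r / ((1 + t) * (1 - s))) • w‖ ^ 2 := by
  rw [norm_sub_sq_real, norm_sub_sq_real, norm_smul, norm_smul, inner_smul_left, inner_smul_right,
    he, mul_pow, mul_pow, norm_eq_abs, norm_eq_abs, sq_abs, sq_abs, RCLike.conj_to_real]
  have hw : ‖w‖ ^ 2 = 1 - s ^ 2 := by linarith
  have hr : r ^ 2 = 1 - t ^ 2 := by linarith
  rw [div_pow, hw, hr]
  field_simp
  ring

lemma norm_div_smul_lt_one {F : Type*} [NormedAddCommGroup F] [NormedSpace ℝ F] {w : F}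
    {r s t : ℝ} (ht : t ^ 2 + r ^ 2 = 1) (hs : s ^ 2 + ‖w‖ ^ 2 = 1) (hst : s < t) :
    ‖(r / ((1 + t) * (1 - s))) • w‖ < 1 := by
  have hs_abs : |s| ≤ 1 := (sq_le_one_iff_abs_le_one s).1 (by linarith [sq_nonneg ‖w‖])
  have ht_abs : |t| ≤ 1 := (sq_le_one_iff_abs_le_one t).1 (by linarith [sq_nonneg r])
  have ht1 : 0 < 1 + t := by linarith [neg_le_of_abs_le hs_abs]
  have hs1 : 0 < 1 - s := by linarith [le_of_abs_le ht_abs]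
  rw [← sq_lt_one_iff₀ (norm_nonneg _), norm_smul, mul_pow, norm_eq_abs, sq_abs, div_pow,
    div_mul_eq_mul_div, div_lt_one (by positivity), eq_sub_of_add_eq' ht, eq_sub_of_add_eq' hs]
  have hgap : 0 < (1 + t) * (1 - s) * (t - s) := mul_pos (mul_pos ht1 hs1) (sub_pos.2 hst)
  linarith

section Axis

variable {x : S2} {L : E3 ≃ₗᵢ[ℝ] Cyl3} (hL : L x = WithLp.toLp 2 (1, 0))

include hL

lemma inner_axis (p : E3) : inner ℝ (x : E3) p = (L p).fst := by
  rw [← L.inner_map_map, hL, WithLp.prod_inner_apply]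
  simp

lemma dg_sphericalPoint {p : ℝ × ℝ} (hp : p.1 ∈ Icc 0 π) : dg x (sphericalPoint L p) = p.1 := by
  rw [dg, inner_axis hL, sphericalPoint, L.apply_symm_apply]
  exact arccos_cos hp.1 hp.2

lemma setIntegral_cap {a : ℝ} (ha : a ∈ Icc 0 π) {f : S2 → ℝ}
    (hf : IntegrableOn f (cap x a) sigma2) :
    ∫ u in cap x a, f u ∂sigma2 =
      (4 * π)⁻¹ * ∫ θ in 0..a, sin θ * ∫ φ in -π..π, f (sphericalPoint L (θ, φ)) := by
  have hcap : MeasurableSet (cap x a) := (isClosed_cap x a).measurableSet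
  rw [← integral_indicator hcap, integral_sigma2 L (hf.integrable_indicator hcap)]
  congr 1
  have hsection {θ : ℝ} (hθ : θ ∈ Ioc 0 π) :
      sin θ * ∫ φ in -π..π, (cap x a).indicator f (sphericalPoint L (θ, φ)) =
        (Iic a).indicator (fun θ ↦ sin θ * ∫ φ in -π..π, f (sphericalPoint L (θ, φ))) θ := by
    have hmem (φ : ℝ) : sphericalPoint L (θ, φ) ∈ cap x a ↔ θ ≤ a := by
      rw [cap, mem_ofPred_eq, dg_sphericalPoint hL (Ioc_subset_Icc_self hθ)]
    by_cases hθa : θ ≤ a <;> simp [indicator, hmem, hθa]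
  rw [intervalIntegral.integral_of_le pi_pos.le, intervalIntegral.integral_of_le ha.1,
    setIntegral_congr_fun measurableSet_Ioc fun θ ↦ hsection,
    setIntegral_indicator measurableSet_Iic, Ioc_inter_Iic, min_eq_right ha.2]

lemma inner_axis_sq_add_norm_sq (v : S2) :
    inner ℝ (x : E3) (v : E3) ^ 2 + ‖(L v).snd‖ ^ 2 = 1 := by
  rw [inner_axis hL]
  simpa using (WithLp.prod_norm_sq_eq_of_L2 (L v)).symm

lemma dist_sphericalPoint_sq {θ φ : ℝ} {v : S2} (hθ : 1 + cos θ ≠ 0)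
    (hv : 1 - inner ℝ (x : E3) (v : E3) ≠ 0) :
    dist (sphericalPoint L (θ, φ)) v ^ 2 = (1 + cos θ) * (1 - inner ℝ (x : E3) (v : E3)) *
      ‖circleMap 0 1 φ -
        (sin θ / ((1 + cos θ) * (1 - inner ℝ (x : E3) (v : E3)))) • (L v).snd‖ ^ 2 := by
  rw [← sq_sub_add_norm_smul_sub_sq (by simp) (cos_sq_add_sin_sq θ)
      (inner_axis_sq_add_norm_sq hL v) hθ hv,
    inner_axis hL, Subtype.dist_eq, dist_eq_norm, ← L.norm_map, map_sub,
    WithLp.prod_norm_sq_eq_of_L2]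
  simp [sphericalPoint, circleMap_zero]

lemma integral_log_dist_sphericalPoint {θ : ℝ} {v : S2}
    (hvθ : inner ℝ (x : E3) (v : E3) < cos θ) :
    ∫ φ in -π..π, log (dist (sphericalPoint L (θ, φ)) v) =
      π * (log (1 + cos θ) + log (1 - inner ℝ (x : E3) (v : E3))) := by
  have hs := inner_mem_Icc x v
  have hvnorm := inner_axis_sq_add_norm_sq hL v
  have hsq (φ : ℝ) := dist_sphericalPoint_sq hL (θ := θ) (φ := φ) (v := v)
  set s := inner ℝ (x : E3) (v : E3)
  set ζ : ℂ := (sin θ / ((1 + cos θ) * (1 - s))) • (L v).snd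
  have ht : 0 < 1 + cos θ := by linarith [hs.1]
  have hs1 : 0 < 1 - s := by linarith [cos_le_one θ]
  have hζ1 : ‖ζ‖ < 1 := norm_div_smul_lt_one (cos_sq_add_sin_sq θ) hvnorm hvθ
  have hne (φ : ℝ) : ‖circleMap 0 1 φ - ζ‖ ≠ 0 := by
    rw [norm_ne_zero_iff, sub_ne_zero]
    intro h
    simp [← h] at hζ1
  have hlog (φ : ℝ) : log (dist (sphericalPoint L (θ, φ)) v) =
      (log (1 + cos θ) + log (1 - s)) / 2 + log ‖circleMap 0 1 φ - ζ‖ := by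
    have h := congrArg log (hsq φ ht.ne' hs1.ne')
    rw [log_mul (by positivity) (pow_ne_zero 2 (hne φ)), log_mul ht.ne' hs1.ne', log_pow,
      log_pow] at h
    push_cast at h
    linarith
  have hint : IntervalIntegrable (fun φ ↦ log ‖circleMap 0 1 φ - ζ‖) volume (-π) π :=
    ((((continuous_circleMap 0 1).sub continuous_const).norm).log hne).intervalIntegrable _ _
  simp only [hlog]
  rw [intervalIntegral.integral_add intervalIntegrable_const hint,
    integral_log_norm_circleMap_sub hζ1, intervalIntegral.integral_const, smul_eq_mul]
  ring

end Axis

lemma one_add_cos_pos {θ : ℝ} (hθ : θ ∈ Ico 0 π) : 0 < 1 + cos θ := by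
  have h := cos_lt_cos_of_nonneg_of_le_pi hθ.1 le_rfl hθ.2
  rw [cos_pi] at h
  linarith

lemma intervalIntegrable_sin_mul_log_one_add_cos {a : ℝ} (ha : a ∈ Ico 0 π) :
    IntervalIntegrable (fun θ ↦ sin θ * log (1 + cos θ)) volume 0 a := by
  refine ContinuousOn.intervalIntegrable
    (continuousOn_sin.mul (ContinuousOn.log (by fun_prop) fun θ hθ ↦ ?_))
  rw [uIcc_of_le ha.1] at hθ
  exact (one_add_cos_pos ⟨hθ.1, hθ.2.trans_lt ha.2⟩).ne'

lemma integral_sin_mul_log_one_add_cos {a : ℝ} (ha : a ∈ Ico 0 π) :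
    ∫ θ in 0..a, sin θ * log (1 + cos θ) =
      (1 + cos a) * (1 - log (1 + cos a)) - 2 * (1 - log 2) := by
  have hderiv : ∀ θ ∈ uIcc 0 a, HasDerivAt (fun θ ↦ (1 + cos θ) * (1 - log (1 + cos θ)))
      (sin θ * log (1 + cos θ)) θ := fun θ hθ ↦ by
    rw [uIcc_of_le ha.1] at hθ
    have hpos := one_add_cos_pos ⟨hθ.1, hθ.2.trans_lt ha.2⟩
    have hcos := (hasDerivAt_cos θ).const_add 1
    refine (hcos.fun_mul ((hcos.log hpos.ne').const_sub 1)).congr_deriv ?_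
    field_simp
    ring
  rw [intervalIntegral.integral_eq_sub_of_hasDerivAt hderiv
    (intervalIntegrable_sin_mul_log_one_add_cos ha), cos_zero]
  norm_num

lemma toReal_sigma2_cap (x : S2) {a : ℝ} (ha : a ∈ Icc 0 π) :
    (sigma2 (cap x a)).toReal = (1 - cos a) / 2 := by
  obtain ⟨L, hL⟩ := exists_axis_isometry x
  have h := setIntegral_cap hL ha (f := fun _ ↦ 1) (integrable_const 1)
  simp only [intervalIntegral.integral_const, intervalIntegral.integral_mul_const, integral_sin,
    setIntegral_const, smul_eq_mul, mul_one, cos_zero] at h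
  rw [← measureReal_def, h]
  field_simp
  ring

lemma integrableOn_log_dist {s : Set S2} (hs : IsClosed s) {v : S2} (hv : v ∉ s) :
    IntegrableOn (fun u ↦ log (dist u v)) s sigma2 := by
  refine ContinuousOn.integrableOn_compact hs.isCompact (ContinuousOn.log (by fun_prop) ?_)
  exact fun u hu ↦ dist_ne_zero.2 (ne_of_mem_of_not_mem hu hv)

lemma one_add_cos_eq (a : ℝ) : 1 + cos a = 2 * cos (a / 2) ^ 2 := by
  rw [cos_sq, mul_div_cancel₀ a two_ne_zero]
  ring

lemma log_one_add_cos {a : ℝ} (ha : cos (a / 2) ≠ 0) :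
    log (1 + cos a) = log 2 + 2 * log (cos (a / 2)) := by
  rw [one_add_cos_eq, log_mul two_ne_zero (pow_ne_zero 2 ha), log_pow, Nat.cast_ofNat]

lemma one_sub_cos_mul_cot_half_sq {a : ℝ} (ha : sin (a / 2) ≠ 0) :
    (1 - cos a) * cot (a / 2) ^ 2 = 1 + cos a := by
  have hsin : 1 - cos a = 2 * sin (a / 2) ^ 2 := by
    linarith [one_add_cos_eq a, sin_sq_add_cos_sq (a / 2)]
  rw [cot_eq_cos_div_sin, hsin, one_add_cos_eq]
  field_simp

lemma setIntegral_cap_log_dist {x v : S2} {a : ℝ} (ha : a ∈ Ico 0 π) (hv : v ∉ cap x a) :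
    ∫ u in cap x a, log (dist u v) ∂sigma2 =
      ((1 + cos a) * (1 - log (1 + cos a)) - 2 * (1 - log 2) +
        (1 - cos a) * log (1 - inner ℝ (x : E3) (v : E3))) / 4 := by
  obtain ⟨L, hL⟩ := exists_axis_isometry x
  have hvθ {θ : ℝ} (hθ : θ ∈ uIcc 0 a) : inner ℝ (x : E3) (v : E3) < cos θ := by
    rw [uIcc_of_le ha.1] at hθ
    exact (inner_lt_cos_of_notMem_cap ha.1 hv).trans_le
      (cos_le_cos_of_nonneg_of_le_pi hθ.1 ha.2.le hθ.2)
  have hcircle : ∫ θ in 0..a, sin θ * ∫ φ in -π..π, log (dist (sphericalPoint L (θ, φ)) v) =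
      ∫ θ in 0..a, π * (sin θ * log (1 + cos θ) +
        sin θ * log (1 - inner ℝ (x : E3) (v : E3))) := by
    refine intervalIntegral.integral_congr fun θ hθ ↦ ?_
    simp only [integral_log_dist_sphericalPoint hL (hvθ hθ)]
    ring
  rw [setIntegral_cap hL (Ico_subset_Icc_self ha)
      (integrableOn_log_dist (isClosed_cap x a) hv), hcircle, intervalIntegral.integral_const_mul,
    intervalIntegral.integral_add (intervalIntegrable_sin_mul_log_one_add_cos ha) (by simp),
    integral_sin_mul_log_one_add_cos ha,
    intervalIntegral.integral_mul_const, integral_sin, cos_zero]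
  field_simp

lemma setIntegral_cap_log_one_div_dist {x v : S2} {a : ℝ} (ha : a ∈ Ioo 0 π) (hv : v ∉ cap x a) :
    ∫ u in cap x a, log (1 / dist u v) ∂sigma2 = (sigma2 (cap x a)).toReal *
      (log (1 / dist x v) + (1 / 2 + cot (a / 2) ^ 2 * log (cos (a / 2)))) := by
  have hhalf : a / 2 ∈ Ioo 0 (π / 2) := ⟨half_pos ha.1, div_lt_div_of_pos_right ha.2 two_pos⟩
  have hcos : cos (a / 2) ≠ 0 := (cos_pos_of_mem_Ioo ⟨by linarith [hhalf.1, pi_pos], hhalf.2⟩).ne'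
  have hsin : sin (a / 2) ≠ 0 := (sin_pos_of_mem_Ioo ⟨hhalf.1, by linarith [hhalf.2, pi_pos]⟩).ne'
  have hxv : x ≠ v := ne_of_mem_of_not_mem (self_mem_cap x ha.1.le) hv
  simp only [one_div, log_inv]
  rw [integral_neg, setIntegral_cap_log_dist (Ioo_subset_Ico_self ha) hv,
    toReal_sigma2_cap x (Ioo_subset_Icc_self ha), log_dist_eq hxv, log_one_add_cos hcos]
  linear_combination -(log (cos (a / 2)) / 2) * one_sub_cos_mul_cot_half_sq hsin

theorem cap_mutual_energy_eq_general {a b : ℝ} (ha : a ∈ Ioo 0 π) (hb : b ∈ Ioo 0 π) {x y : S2}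
    (hdisj : Disjoint (cap x a) (cap y b)) :
    ((sigma2 (cap x a)).toReal * (sigma2 (cap y b)).toReal)⁻¹ *
      ∫ u in cap x a, ∫ v in cap y b, log (1 / dist u v) ∂sigma2 ∂sigma2 =
    log (1 / dist x y) + (1 / 2 + cot (a / 2) ^ 2 * log (cos (a / 2))) +
      (1 / 2 + cot (b / 2) ^ 2 * log (cos (b / 2))) := by
  set k := 1 / 2 + cot (b / 2) ^ 2 * log (cos (b / 2))
  have hy : y ∉ cap x a := disjoint_right.1 hdisj (self_mem_cap y hb.1.le)
  have hinner : ∀ u ∈ cap x a, ∫ v in cap y b, log (1 / dist u v) ∂sigma2 =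
      (sigma2 (cap y b)).toReal * (log (1 / dist u y) + k) := fun u hu ↦ by
    simpa only [dist_comm] using
      setIntegral_cap_log_one_div_dist hb (disjoint_left.1 hdisj hu)
  have hint : IntegrableOn (fun u ↦ log (1 / dist u y)) (cap x a) sigma2 := by
    simp only [one_div, log_inv]
    exact (integrableOn_log_dist (isClosed_cap x a) hy).neg
  have hpos (z : S2) {c : ℝ} (hc : c ∈ Ioo 0 π) : (sigma2 (cap z c)).toReal ≠ 0 := by
    rw [toReal_sigma2_cap z (Ioo_subset_Icc_self hc)]
    have := cos_lt_cos_of_nonneg_of_le_pi le_rfl hc.2.le hc.1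
    rw [cos_zero] at this
    linarith
  rw [setIntegral_congr_fun (isClosed_cap x a).measurableSet hinner, integral_const_mul,
    integral_add hint (integrable_const k), setIntegral_cap_log_one_div_dist ha hy,
    setIntegral_const, measureReal_def, smul_eq_mul]
  field_simp [hpos x ha, hpos y hb]

/-- For disjoint spherical caps of geodesic radius `a ∈ (0, π/2)`, the mutual energy
of the normalized uniform measures equals `log(1/|x−y|) + 1 + 2 cot²(a/2) log cos(a/2)`. -/
theorem cap_mutual_energy_eq (a : ℝ) (ha : a ∈ Set.Ioo 0 (π/2)) (x y : S2)
    (hdisj : Disjoint (cap x a) (cap y a)) :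
    ((sigma2 (cap x a)).toReal ^ 2)⁻¹ *
      ∫ u in cap x a, ∫ v in cap y a, Real.log (1 / dist u v) ∂sigma2 ∂sigma2 =
    Real.log (1 / dist x y) + 1 + 2 * Real.cot (a/2) ^ 2 * Real.log (Real.cos (a/2)) := by
  have ha' : a ∈ Ioo 0 π := ⟨ha.1, ha.2.trans (half_lt_self pi_pos)⟩
  have h := cap_mutual_energy_eq_general ha' ha' hdisj
  rw [toReal_sigma2_cap y (Ioo_subset_Icc_self ha'),
    ← toReal_sigma2_cap x (Ioo_subset_Icc_self ha'), ← sq] at h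
  linarith
end
end

section
/- Let ν be a probability measure on S² with bounded density with respect to σ, and suppose μ = ν − σ has finite logarithmic energy I(μ) = ∫∫ log(1/|x−y|) dμ(x)dμ(y). Then for every function f : S² → ℝ that is 1-Lipschitz with respect to the geodesic distance, ( ∫_{S²} f dν − ∫_{S²} f dσ )² ≤ 2·I(μ). -/
open MeasureTheory Real Filter Set

noncomputable section

/-- The normalized restriction `σ(B)⁻¹ · χ_B · σ` of `σ` to a set `B ⊆ S²`. -/
noncomputable def capUniform (B : Set S2) : Measure S2 := (sigma2 B)⁻¹ • sigma2.restrict B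

instance (B : Set S2) : IsFiniteMeasure (capUniform B) := by
  constructor
  rw [capUniform]
  simp only [Measure.smul_apply, smul_eq_mul, Measure.restrict_apply_univ]
  exact lt_of_le_of_lt (ENNReal.inv_mul_le_one _) ENNReal.one_lt_top

/-- The logarithmic kernel `G(x,y) = log (1/|x-y|)`. -/
noncomputable def G (x y : S2) : ℝ := Real.log (1 / dist x y)

/-- The logarithmic energy `I(μ) = ∬ G dμ dμ` of a finite signed measure `μ`, computed
via its Jordan decomposition `μ = μ⁺ - μ⁻`:
`I(μ) = ∬ G dμ⁺dμ⁺ - ∬ G dμ⁺dμ⁻ - ∬ G dμ⁻dμ⁺ + ∬ G dμ⁻dμ⁻`. -/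
noncomputable def signedLogEnergy (μ : SignedMeasure S2) : ℝ :=
  (∫ x, ∫ y, G x y ∂μ.toJordanDecomposition.posPart ∂μ.toJordanDecomposition.posPart)
  - (∫ x, ∫ y, G x y ∂μ.toJordanDecomposition.negPart ∂μ.toJordanDecomposition.posPart)
  - (∫ x, ∫ y, G x y ∂μ.toJordanDecomposition.posPart ∂μ.toJordanDecomposition.negPart)
  + (∫ x, ∫ y, G x y ∂μ.toJordanDecomposition.negPart ∂μ.toJordanDecomposition.negPart)

/-! Regularize the kernel `log (1 / |x - y|)` to `-½ log (ε + |x - y|²)`. Its spherical Laplacian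
is, up to constants, an approximate identity `δ_ε`. Let `m` be a bounded density of mean zero,
`U_ε` its regularized potential and `W = 2 ∇U_ε`. Rotation invariance of `σ` gives integration by
parts on the sphere, hence `∫ F (δ_ε * m) = ∫ ⟨∇F, W⟩` and `∫ |W|² = 2 ∫ U_ε (δ_ε * m)`. When
`|∇F| ≤ 1`, Cauchy-Schwarz yields `(∫ F (δ_ε * m))² ≤ 2 ∫ U_ε (δ_ε * m)`. Since
`1 / |x - y|` is integrable and `m` is bounded, `U_ε` converges uniformly to the logarithmic
potential as `ε → 0`, and the right-hand side converges to twice the energy. A Lipschitz function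
is a uniform limit of smooth ones with `|∇F| ≤ 1 + δ`, obtained by extending it radially and
mollifying. -/

open Metric Topology Function
open scoped InnerProductSpace NNReal ENNReal

lemma integrable_of_continuous {X F : Type*} [TopologicalSpace X] [CompactSpace X]
    [MeasurableSpace X] [OpensMeasurableSpace X] [NormedAddCommGroup F] {μ : Measure X}
    [IsFiniteMeasure μ] {f : X → F} (hf : Continuous f) : Integrable f μ :=
  hf.integrable_of_hasCompactSupport (HasCompactSupport.of_compactSpace f)

section Rotation

variable {E : Type*} [NormedAddCommGroup E] [InnerProductSpace ℝ E]

/-- The action of a linear isometry on the unit sphere. -/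
def sphereMap (U : E ≃ₗᵢ[ℝ] E) (y : sphere (0 : E) 1) : sphere (0 : E) 1 :=
  ⟨U y, by simp⟩

lemma continuous_sphereMap (U : E ≃ₗᵢ[ℝ] E) : Continuous (sphereMap U) := by
  unfold sphereMap; fun_prop

lemma real_inner_mem_Icc (x y : sphere (0 : E) 1) : ⟪(x : E), (y : E)⟫_ℝ ∈ Icc (-1 : ℝ) 1 := by
  have h := abs_real_inner_le_norm (x : E) (y : E)
  simp only [norm_eq_of_mem_sphere, mul_one] at h
  exact abs_le.1 h

lemma continuous_restrict_of_contDiffAt {H : E → ℝ}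
    (hH : ∀ y : sphere (0 : E) 1, ContDiffAt ℝ 1 H y) :
    Continuous fun y : sphere (0 : E) 1 => H y :=
  continuous_iff_continuousAt.2 fun y =>
    (hH y).continuousAt.comp (f := ((↑) : sphere (0 : E) 1 → E)) continuous_subtype_val.continuousAt

lemma continuous_fderiv_of_contDiffAt {H : E → ℝ}
    (hH : ∀ y : sphere (0 : E) 1, ContDiffAt ℝ 1 H y) :
    Continuous fun y : sphere (0 : E) 1 => fderiv ℝ H y :=
  continuous_iff_continuousAt.2 fun y =>
    ((hH y).continuousAt_fderiv one_ne_zero).comp (f := ((↑) : sphere (0 : E) 1 → E))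
      continuous_subtype_val.continuousAt

/-- Invariance of a measure on the unit sphere under the whole orthogonal group. -/
def IsRotationInvariant [MeasurableSpace E] (σ : Measure (sphere (0 : E) 1)) : Prop :=
  ∀ U : E ≃ₗᵢ[ℝ] E, MeasurePreserving (sphereMap U) σ σ

lemma IsRotationInvariant.smul [MeasurableSpace E] {σ : Measure (sphere (0 : E) 1)}
    (hσ : IsRotationInvariant σ) (c : ℝ≥0∞) : IsRotationInvariant (c • σ) :=
  fun U => (hσ U).smul_measure c

lemma fderiv_mul_comp_inner {F : E → ℝ} {ψ : ℝ → ℝ} {x y : E} (hF : DifferentiableAt ℝ F y)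
    (hψ : DifferentiableAt ℝ ψ ⟪x, y⟫_ℝ) (v : E) :
    fderiv ℝ (fun z => F z * ψ ⟪x, z⟫_ℝ) y v =
      F y * (deriv ψ ⟪x, y⟫_ℝ * ⟪x, v⟫_ℝ) + ψ ⟪x, y⟫_ℝ * fderiv ℝ F y v := by
  have hcomp : HasFDerivAt (fun z => ψ ⟪x, z⟫_ℝ) (deriv ψ ⟪x, y⟫_ℝ • innerSL ℝ x) y :=
    hψ.hasDerivAt.comp_hasFDerivAt y (innerSL ℝ x).hasFDerivAt
  simp [(hF.hasFDerivAt.fun_mul hcomp).fderiv]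

lemma fderiv_mul_comp_inner_tangential {F : E → ℝ} {ψ : ℝ → ℝ} (x : sphere (0 : E) 1) {y : E}
    (hF : DifferentiableAt ℝ F y) (hψ : DifferentiableAt ℝ ψ ⟪(x : E), y⟫_ℝ) :
    fderiv ℝ (fun z => F z * ψ ⟪(x : E), z⟫_ℝ) y (x - ⟪(x : E), y⟫_ℝ • y) =
      F y * (deriv ψ ⟪(x : E), y⟫_ℝ * (1 - ⟪(x : E), y⟫_ℝ ^ 2)) +
        ψ ⟪(x : E), y⟫_ℝ * fderiv ℝ F y (x - ⟪(x : E), y⟫_ℝ • y) := by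
  have hinner : ⟪(x : E), x - ⟪(x : E), y⟫_ℝ • y⟫_ℝ = 1 - ⟪(x : E), y⟫_ℝ ^ 2 := by
    simp [inner_sub_right, inner_smul_right, pow_two]
  rw [fderiv_mul_comp_inner hF hψ, hinner]

/-- The generator `v ↦ ⟪u, v⟫ x - ⟪x, v⟫ u` of the rotations in the plane of `u` and `x`. -/
def rotationGenerator (u x : E) : E →L[ℝ] E :=
  (innerSL ℝ u).smulRight x - (innerSL ℝ x).smulRight u

lemma rotationGenerator_apply (u x v : E) :
    rotationGenerator u x v = ⟪u, v⟫_ℝ • x - ⟪x, v⟫_ℝ • u := by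
  simp [rotationGenerator]

lemma sum_inner_smul_rotationGenerator {ι : Type*} [Fintype ι] (b : OrthonormalBasis ι ℝ E)
    (x y : E) :
    ∑ j, ⟪b j, y⟫_ℝ • rotationGenerator (b j) x y = ‖y‖ ^ 2 • x - ⟪x, y⟫_ℝ • y := by
  simp only [rotationGenerator_apply, smul_sub, Finset.sum_sub_distrib, smul_smul,
    ← Finset.sum_smul, ← b.sum_sq_inner_right y, pow_two]
  simp only [mul_comm _ ⟪x, y⟫_ℝ, ← smul_smul, ← Finset.smul_sum, b.sum_repr']

lemma sum_inner_rotationGenerator {ι : Type*} [Fintype ι] (b : OrthonormalBasis ι ℝ E) (x y : E) :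
    ∑ j, ⟪b j, rotationGenerator (b j) x y⟫_ℝ = -((Fintype.card ι - 1) * ⟪x, y⟫_ℝ) := by
  have hxy : ∑ j, ⟪b j, y⟫_ℝ * ⟪b j, x⟫_ℝ = ⟪x, y⟫_ℝ := by
    simpa only [real_inner_comm, mul_comm] using b.sum_inner_mul_inner x y
  simp only [rotationGenerator_apply, inner_sub_right, inner_smul_right, Finset.sum_sub_distrib,
    hxy, real_inner_self_eq_norm_sq, b.norm_eq_one, Finset.sum_const, Finset.card_univ,
    nsmul_eq_mul]
  ring

variable [FiniteDimensional ℝ E]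

lemma rotationGenerator_mem_skewAdjoint (u x : E) :
    rotationGenerator u x ∈ skewAdjoint (E →L[ℝ] E) := by
  refine skewAdjoint.mem_iff.2 (ContinuousLinearMap.ext fun v => ext_inner_right ℝ fun w => ?_)
  rw [ContinuousLinearMap.star_eq_adjoint, ContinuousLinearMap.adjoint_inner_left]
  simp only [rotationGenerator_apply, neg_apply, inner_sub_left, inner_sub_right, inner_neg_left,
    inner_smul_left, inner_smul_right, RCLike.conj_to_real]
  rw [real_inner_comm u v, real_inner_comm x v]
  ring

/-- The flow `exp (t A)` of rotations generated by a skew-adjoint operator `A`. -/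
def skewFlow {A : E →L[ℝ] E} (hA : A ∈ skewAdjoint (E →L[ℝ] E)) (t : ℝ) : E ≃ₗᵢ[ℝ] E :=
  Unitary.linearIsometryEquiv ⟨NormedSpace.exp (t • A),
    letI : NormedAlgebra ℚ (E →L[ℝ] E) := NormedAlgebra.restrictScalars ℚ ℝ _
    NormedSpace.exp_mem_unitary_of_mem_skewAdjoint (skewAdjoint.smul_mem t hA)⟩

lemma skewFlow_zero {A : E →L[ℝ] E} (hA : A ∈ skewAdjoint (E →L[ℝ] E)) (v : E) :
    skewFlow hA 0 v = v := by
  change NormedSpace.exp ((0 : ℝ) • A) v = v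
  simp [NormedSpace.exp_zero]

lemma hasDerivAt_skewFlow {A : E →L[ℝ] E} (hA : A ∈ skewAdjoint (E →L[ℝ] E)) (t : ℝ) (v : E) :
    HasDerivAt (fun s => skewFlow hA s v) (A (skewFlow hA t v)) t := by
  have h := (hasDerivAt_exp_smul_const' (𝕂 := ℝ) A t).clm_apply (hasDerivAt_const t v)
  simp only [map_zero, add_zero] at h
  exact h

variable [MeasurableSpace E] [BorelSpace E]

lemma isRotationInvariant_toSphere : IsRotationInvariant (volume : Measure E).toSphere := by
  intro U
  have hm := (continuous_sphereMap U).measurable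
  refine ⟨hm, Measure.ext fun s hs => ?_⟩
  rw [Measure.map_apply hm hs, Measure.toSphere_apply' _ hs, Measure.toSphere_apply' _ (hm hs)]
  congr 1
  refine Eq.trans ?_ ((LinearIsometryEquiv.measurePreserving U).measure_preimage_emb
    U.toHomeomorph.measurableEmbedding _)
  congr 1
  ext z
  simp only [Set.mem_smul, Set.mem_image, Set.mem_preimage, Subtype.exists]
  constructor
  · rintro ⟨r, hr, w, ⟨y, hy, hys, rfl⟩, rfl⟩
    exact ⟨r, hr, U y, ⟨U y, by simpa using hy, hys, rfl⟩, by simp⟩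
  · rintro ⟨r, hr, w, ⟨y, hy, hys, rfl⟩, h⟩
    refine ⟨r, hr, U.symm y, ⟨U.symm y, by simpa using hy, ?_, rfl⟩, ?_⟩
    · simpa [sphereMap] using hys
    · apply U.injective; simp [h]

variable {σ : Measure (sphere (0 : E) 1)} [IsFiniteMeasure σ]

/- Differentiate the constant function `t ↦ ∫ H (exp (t A) y) dσ(y)` at `t = 0`. -/
theorem IsRotationInvariant.integral_fderiv_skewAdjoint (hσ : IsRotationInvariant σ)
    {A : E →L[ℝ] E} (hA : A ∈ skewAdjoint (E →L[ℝ] E)) {H : E → ℝ}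
    (hH : ∀ y : sphere (0 : E) 1, ContDiffAt ℝ 1 H y) :
    ∫ y : sphere (0 : E) 1, fderiv ℝ H y (A y) ∂σ = 0 := by
  have hHc := continuous_restrict_of_contDiffAt hH
  have hH'c := continuous_fderiv_of_contDiffAt hH
  let φ (t : ℝ) (y : sphere (0 : E) 1) := sphereMap (skewFlow hA t) y
  have hφ (t : ℝ) : Continuous (φ t) := continuous_sphereMap _
  obtain ⟨B, hB⟩ : ∃ B, ∀ y : sphere (0 : E) 1, ‖fderiv ℝ H y‖ ≤ B := by
    obtain ⟨B, hB⟩ := (isCompact_range hH'c).isBounded.exists_norm_le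
    exact ⟨B, fun y => hB _ ⟨y, rfl⟩⟩
  have hbound (t : ℝ) (y : sphere (0 : E) 1) : ‖fderiv ℝ H (φ t y) (A (φ t y))‖ ≤ B * ‖A‖ :=
    (fderiv ℝ H (φ t y)).le_of_opNorm_le_of_le (hB _) (by simpa using A.le_opNorm (φ t y : E))
  have hderiv := (hasDerivAt_integral_of_dominated_loc_of_deriv_le (μ := σ)
    (F := fun t y => H (φ t y)) (F' := fun t y => fderiv ℝ H (φ t y) (A (φ t y)))
    (x₀ := 0) (bound := fun _ => B * ‖A‖) univ_mem
    (.of_forall fun t => (hHc.comp (hφ t)).aestronglyMeasurable)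
    (integrable_of_continuous (hHc.comp (hφ 0)))
    ((hH'c.comp (hφ 0)).clm_apply
      (A.continuous.comp (continuous_subtype_val.comp (hφ 0)))).aestronglyMeasurable
    (.of_forall fun y t _ => hbound t y) (integrable_const _)
    (.of_forall fun y t _ => ((hH (φ t y)).differentiableAt one_ne_zero).hasFDerivAt
      |>.comp_hasDerivAt t (hasDerivAt_skewFlow hA t y))).2
  have hconst (t : ℝ) : ∫ y, H (φ t y) ∂σ = ∫ y : sphere (0 : E) 1, H y ∂σ := by
    conv_rhs => rw [← (hσ (skewFlow hA t)).map_eq]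
    exact (integral_map (hφ t).aemeasurable hHc.aestronglyMeasurable).symm
  have hzero : ∀ y, φ 0 y = y := fun y => Subtype.ext (skewFlow_zero hA y)
  simp only [hconst, hzero] at hderiv
  exact hderiv.unique (hasDerivAt_const _ _)

/- Sum over an orthonormal basis `b` the identity `integral_fderiv_skewAdjoint` for the generators
`rotationGenerator (b j) x` and the functions `⟪b j, ·⟫ H`. -/
theorem IsRotationInvariant.integral_fderiv_tangential (hσ : IsRotationInvariant σ) (x : E)
    {H : E → ℝ} (hH : ∀ y : sphere (0 : E) 1, ContDiffAt ℝ 1 H y) :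
    ∫ y : sphere (0 : E) 1, fderiv ℝ H y (x - ⟪x, (y : E)⟫_ℝ • (y : E)) ∂σ =
      ∫ y : sphere (0 : E) 1, (Module.finrank ℝ E - 1) * (⟪x, (y : E)⟫_ℝ * H y) ∂σ := by
  let b := stdOrthonormalBasis ℝ E
  have hHj (j) (y : sphere (0 : E) 1) : ContDiffAt ℝ 1 (fun v => ⟪b j, v⟫_ℝ * H v) y :=
    (innerSL ℝ (b j)).contDiff.contDiffAt.mul (hH y)
  have hproduct (j) (y : sphere (0 : E) 1) (v : E) :
      fderiv ℝ (fun v => ⟪b j, v⟫_ℝ * H v) y v =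
        ⟪b j, (y : E)⟫_ℝ * fderiv ℝ H y v + H y * ⟪b j, v⟫_ℝ := by
    have hd : HasFDerivAt (fun v => ⟪b j, v⟫_ℝ * H v)
        (⟪b j, (y : E)⟫_ℝ • fderiv ℝ H y + H y • innerSL ℝ (b j)) y :=
      (innerSL ℝ (b j)).hasFDerivAt.mul ((hH y).differentiableAt one_ne_zero).hasFDerivAt
    simp [hd.fderiv]
  have hpoint (y : sphere (0 : E) 1) :
      ∑ j, fderiv ℝ (fun v => ⟪b j, v⟫_ℝ * H v) y (rotationGenerator (b j) x y) =
        fderiv ℝ H y (x - ⟪x, (y : E)⟫_ℝ • (y : E)) -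
          (Module.finrank ℝ E - 1) * (⟪x, (y : E)⟫_ℝ * H y) := by
    have hfield := sum_inner_smul_rotationGenerator b x (y : E)
    simp only [norm_eq_of_mem_sphere, one_pow, one_smul] at hfield
    simp only [hproduct, Finset.sum_add_distrib, ← Finset.mul_sum, sum_inner_rotationGenerator,
      ← hfield, map_sum, map_smul, smul_eq_mul, Fintype.card_fin]
    ring
  have hHc := continuous_restrict_of_contDiffAt hH
  have hH'c := continuous_fderiv_of_contDiffAt hH
  have htx : Continuous fun y : sphere (0 : E) 1 => ⟪x, (y : E)⟫_ℝ := by fun_prop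
  have hcont : Continuous fun y : sphere (0 : E) 1 =>
      (Module.finrank ℝ E - 1 : ℝ) * (⟪x, (y : E)⟫_ℝ * H y) := continuous_const.mul (htx.mul hHc)
  rw [← sub_eq_zero, ← integral_sub (integrable_of_continuous (by fun_prop))
    (integrable_of_continuous hcont)]
  simp only [← hpoint]
  rw [integral_finsetSum]
  · exact Finset.sum_eq_zero fun j _ => hσ.integral_fderiv_skewAdjoint
      (rotationGenerator_mem_skewAdjoint _ _) (hHj j)
  · intro j _
    have := continuous_fderiv_of_contDiffAt (hHj j)
    exact integrable_of_continuous (by fun_prop)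

theorem IsRotationInvariant.integral_zonal_gradient (hσ : IsRotationInvariant σ)
    (x : sphere (0 : E) 1) {ψ : ℝ → ℝ} (hψ : ∀ t ∈ Icc (-1 : ℝ) 1, ContDiffAt ℝ 1 ψ t)
    {F : E → ℝ} (hF : ∀ y : sphere (0 : E) 1, ContDiffAt ℝ 1 F y) :
    ∫ y : sphere (0 : E) 1, fderiv ℝ F y
      (ψ ⟪(x : E), (y : E)⟫_ℝ • ((x : E) - ⟪(x : E), (y : E)⟫_ℝ • (y : E))) ∂σ =
    ∫ y : sphere (0 : E) 1, F y *
      ((Module.finrank ℝ E - 1) * ⟪(x : E), (y : E)⟫_ℝ * ψ ⟪(x : E), (y : E)⟫_ℝ -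
        (1 - ⟪(x : E), (y : E)⟫_ℝ ^ 2) * deriv ψ ⟪(x : E), (y : E)⟫_ℝ) ∂σ := by
  let t (y : sphere (0 : E) 1) := ⟪(x : E), (y : E)⟫_ℝ
  have ht : Continuous t := by fun_prop
  have hψt (y) : ContDiffAt ℝ 1 ψ (t y) := hψ _ (real_inner_mem_Icc x y)
  have hψx (y : sphere (0 : E) 1) : ContDiffAt ℝ 1 (fun v : E => ψ ⟪(x : E), v⟫_ℝ) y :=
    (hψt y).comp (y : E) (innerSL ℝ (x : E)).contDiff.contDiffAt
  have hFc := continuous_restrict_of_contDiffAt hF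
  have hF'c := continuous_fderiv_of_contDiffAt hF
  have hψc : Continuous fun y => ψ (t y) := continuous_restrict_of_contDiffAt hψx
  have hψ'c : Continuous fun y => deriv ψ (t y) := continuous_iff_continuousAt.2 fun y =>
    (((hψt y).continuousAt_fderiv one_ne_zero).clm_apply continuousAt_const).comp ht.continuousAt
  have hdiv : Continuous fun y : sphere (0 : E) 1 =>
      (Module.finrank ℝ E - 1 : ℝ) * (t y * (F y * ψ (t y))) :=
    continuous_const.mul (ht.mul (hFc.mul hψc))
  have hcorr : Continuous fun y : sphere (0 : E) 1 => F y * (deriv ψ (t y) * (1 - t y ^ 2)) :=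
    hFc.mul (hψ'c.mul (continuous_const.sub (ht.pow 2)))
  have hgrad : Continuous fun y : sphere (0 : E) 1 =>
      ψ (t y) * fderiv ℝ F y (x - t y • (y : E)) :=
    hψc.mul (by fun_prop)
  have key := hσ.integral_fderiv_tangential (x : E) fun y => (hF y).mul (hψx y)
  simp only [fun y => fderiv_mul_comp_inner_tangential x ((hF y).differentiableAt one_ne_zero)
    ((hψt y).differentiableAt one_ne_zero)] at key
  rw [integral_add (integrable_of_continuous hcorr) (integrable_of_continuous hgrad),
    ← eq_sub_iff_add_eq', ← integral_sub (integrable_of_continuous hdiv)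
      (integrable_of_continuous hcorr)] at key
  simp only [map_smul, smul_eq_mul]
  rw [key]
  congr with y
  ring

lemma IsRotationInvariant.integral_zonal_divergence (hσ : IsRotationInvariant σ)
    (x : sphere (0 : E) 1) {ψ : ℝ → ℝ} (hψ : ∀ t ∈ Icc (-1 : ℝ) 1, ContDiffAt ℝ 1 ψ t) :
    ∫ y : sphere (0 : E) 1, ((Module.finrank ℝ E - 1) * ⟪(x : E), (y : E)⟫_ℝ *
      ψ ⟪(x : E), (y : E)⟫_ℝ - (1 - ⟪(x : E), (y : E)⟫_ℝ ^ 2) *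
        deriv ψ ⟪(x : E), (y : E)⟫_ℝ) ∂σ = 0 := by
  have h := hσ.integral_zonal_gradient x hψ (F := fun _ => 1) fun _ => contDiffAt_const
  simpa only [fderiv_fun_const, Pi.zero_apply, zero_apply, integral_zero, one_mul] using h.symm

end Rotation

section KernelIntegral

lemma exists_norm_kernel_le {X Y F : Type*} [TopologicalSpace X] [CompactSpace X]
    [TopologicalSpace Y] [CompactSpace Y] [NormedAddCommGroup F] {K : X → Y → F}
    (hK : Continuous (uncurry K)) : ∃ C, ∀ x y, ‖K x y‖ ≤ C := by
  obtain ⟨C, hC⟩ := (isCompact_range hK).isBounded.exists_norm_le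
  exact ⟨C, fun x y => hC _ ⟨(x, y), rfl⟩⟩

variable {X Y F : Type*} [TopologicalSpace X] [CompactSpace X] [MeasurableSpace X]
  [OpensMeasurableSpace X] {μ : Measure X} {m : X → ℝ} [TopologicalSpace Y] [CompactSpace Y]
  [NormedAddCommGroup F] [NormedSpace ℝ F]

lemma integrable_smul_kernel [SecondCountableTopologyEither X F]
    (hm : Integrable m μ) {K : X → Y → F} (hK : Continuous (uncurry K)) (y : Y) :
    Integrable (fun x => m x • K x y) μ := by
  obtain ⟨C, hC⟩ := exists_norm_kernel_le hK
  exact hm.smul_bdd C (hK.uncurry_right y).aestronglyMeasurable (.of_forall fun x => hC x y)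

lemma continuous_integral_smul_kernel [FirstCountableTopology Y]
    [SecondCountableTopologyEither X F] (hm : Integrable m μ) {K : X → Y → F}
    (hK : Continuous (uncurry K)) : Continuous fun y => ∫ x, m x • K x y ∂μ := by
  obtain ⟨C, hC⟩ := exists_norm_kernel_le hK
  refine continuous_of_dominated (bound := fun x => ‖m x‖ * C)
    (fun y => (integrable_smul_kernel hm hK y).aestronglyMeasurable)
    (fun y => .of_forall fun x => ?_) (hm.norm.mul_const C)
    (.of_forall fun x => (hK.uncurry_left x).const_smul (m x))
  rw [norm_smul]
  gcongr
  exact hC x y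

lemma integral_integral_mul_kernel [SecondCountableTopology X] [MeasurableSpace Y]
    [OpensMeasurableSpace Y] {ν : Measure Y} [SFinite μ] [IsFiniteMeasure ν] (hm : Integrable m μ)
    {K : X → Y → ℝ} (hK : Continuous (uncurry K)) :
    ∫ y, ∫ x, m x * K x y ∂μ ∂ν = ∫ x, m x * ∫ y, K x y ∂ν ∂μ := by
  obtain ⟨C, hC⟩ := exists_norm_kernel_le hK
  have hint : Integrable (fun p : X × Y => m p.1 * K p.1 p.2) (μ.prod ν) :=
    (hm.comp_fst ν).mul_bdd hK.aestronglyMeasurable (.of_forall fun p => hC p.1 p.2)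
  rw [← integral_integral_swap hint]
  simp only [integral_const_mul]

end KernelIntegral

section Sphere

instance : IsProbabilityMeasure sigma2 := by
  have hsurf : surf univ ≠ 0 := by
    rw [surf, Ne, Measure.measure_univ_eq_zero]
    exact Measure.toSphere_ne_zero _
  have htop : surf univ ≠ ∞ := by
    rw [surf]
    exact measure_ne_top _ _
  exact ⟨ENNReal.inv_mul_cancel hsurf htop⟩

lemma isRotationInvariant_sigma2 : IsRotationInvariant sigma2 :=
  isRotationInvariant_toSphere.smul _

lemma sphere_dist_sq (x y : S2) : dist x y ^ 2 = 2 - 2 * ⟪(x : E3), (y : E3)⟫_ℝ := by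
  rw [Subtype.dist_eq, dist_eq_norm, norm_sub_sq_real]
  simp only [norm_eq_of_mem_sphere]
  ring

/-- The regularized kernel `log (1 / √(ε + |x - y|²))`, which is `G` for `ε = 0`. -/
def logKernel (ε : ℝ) (x y : S2) : ℝ := -log (ε + dist x y ^ 2) / 2

/-- Twice the spherical gradient of `logKernel ε x` at `y`. -/
def gradKernel (ε : ℝ) (x y : S2) : E3 :=
  (2 / (ε + dist x y ^ 2)) • ((x : E3) - ⟪(x : E3), (y : E3)⟫_ℝ • (y : E3))

/-- The approximate identity `1 - 2 Δ (logKernel ε x)`, where `Δ` is the Laplacian of `S²`. -/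
def deltaKernel (ε : ℝ) (x y : S2) : ℝ := (4 * ε + ε ^ 2) / (ε + dist x y ^ 2) ^ 2

lemma logKernel_comm (ε : ℝ) (x y : S2) : logKernel ε x y = logKernel ε y x := by
  rw [logKernel, logKernel, dist_comm]

lemma deltaKernel_comm (ε : ℝ) (x y : S2) : deltaKernel ε x y = deltaKernel ε y x := by
  rw [deltaKernel, deltaKernel, dist_comm]

lemma G_eq_logKernel_zero : G = logKernel 0 := by
  ext x y
  rw [G, logKernel, one_div, log_inv, zero_add, log_pow]
  push_cast
  ring

variable {ε : ℝ} {m : S2 → ℝ} {F : E3 → ℝ}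

lemma continuous_logKernel (hε : 0 < ε) : Continuous (uncurry (logKernel ε)) := by
  unfold uncurry logKernel
  have (p : S2 × S2) : ε + dist p.1 p.2 ^ 2 ≠ 0 := by positivity
  fun_prop (disch := assumption)

lemma continuous_gradKernel (hε : 0 < ε) : Continuous (uncurry (gradKernel ε)) := by
  unfold uncurry gradKernel
  have (p : S2 × S2) : ε + dist p.1 p.2 ^ 2 ≠ 0 := by positivity
  fun_prop (disch := assumption)

lemma continuous_deltaKernel (hε : 0 < ε) : Continuous (uncurry (deltaKernel ε)) := by
  unfold uncurry deltaKernel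
  have (p : S2 × S2) : (ε + dist p.1 p.2 ^ 2) ^ 2 ≠ 0 := by positivity
  fun_prop (disch := assumption)

theorem integral_fderiv_gradKernel (hε : 0 < ε) (x : S2)
    (hF : ∀ y : S2, ContDiffAt ℝ 1 F y) :
    ∫ y : S2, fderiv ℝ F y (gradKernel ε x y) ∂sigma2 =
      ∫ y : S2, F y * (deltaKernel ε x y - 1) ∂sigma2 := by
  have hR {t : ℝ} (ht : t ∈ Icc (-1 : ℝ) 1) : 0 < ε + (2 - 2 * t) := by linarith [ht.2]
  have hψ (t : ℝ) (ht : t ∈ Icc (-1 : ℝ) 1) :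
      ContDiffAt ℝ 1 (fun t : ℝ => 2 / (ε + (2 - 2 * t))) t :=
    contDiffAt_const.div (by fun_prop) (hR ht).ne'
  have hψ' (t : ℝ) (ht : t ∈ Icc (-1 : ℝ) 1) :
      deriv (fun t : ℝ => 2 / (ε + (2 - 2 * t))) t = 4 / (ε + (2 - 2 * t)) ^ 2 := by
    have hlin : HasDerivAt (fun t : ℝ => ε + (2 - 2 * t)) (-(2 * 1)) t :=
      (((hasDerivAt_id t).const_mul 2).const_sub 2).const_add ε
    rw [((hasDerivAt_const t (2 : ℝ)).fun_div hlin (hR ht).ne').deriv]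
    ring
  have key := isRotationInvariant_sigma2.integral_zonal_gradient x hψ hF
  simp only [gradKernel, deltaKernel, sphere_dist_sq]
  rw [key]
  congr with y
  rw [hψ' _ (real_inner_mem_Icc x y), finrank_euclideanSpace_fin]
  have hne := (hR (real_inner_mem_Icc x y)).ne'
  generalize ⟪(x : E3), (y : E3)⟫_ℝ = t at hne ⊢
  generalize hRt : ε + (2 - 2 * t) = R at hne ⊢
  obtain rfl : t = 1 - (R - ε) / 2 := by linarith
  push_cast
  field_simp
  ring

lemma integral_deltaKernel (hε : 0 < ε) (x : S2) : ∫ y, deltaKernel ε x y ∂sigma2 = 1 := by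
  have hint : Integrable (deltaKernel ε x) sigma2 :=
    integrable_of_continuous ((continuous_deltaKernel hε).uncurry_left x)
  have hsub : ∫ y, (deltaKernel ε x y - 1) ∂sigma2 = ∫ y, deltaKernel ε x y ∂sigma2 - 1 := by
    rw [integral_sub hint (integrable_const 1), integral_const, probReal_univ, one_smul]
  have h := integral_fderiv_gradKernel (F := fun _ => 1) hε x fun _ => contDiffAt_const
  simp only [fderiv_fun_const, Pi.zero_apply, zero_apply, integral_zero, one_mul, hsub] at h
  linarith

lemma fderiv_log_dist_sq (hε : 0 < ε) (x y : S2) {w : E3} (hw : ⟪(y : E3), w⟫_ℝ = 0) :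
    fderiv ℝ (fun v : E3 => -log (ε + ‖(x : E3) - v‖ ^ 2)) y w = ⟪gradKernel ε x y, w⟫_ℝ := by
  have hne : ε + ‖(x : E3) - y‖ ^ 2 ≠ 0 := by positivity
  have hd : HasFDerivAt (fun v : E3 => -log (ε + ‖(x : E3) - v‖ ^ 2))
      (-((ε + ‖(x : E3) - y‖ ^ 2)⁻¹ • (2 • (innerSL ℝ ((x : E3) - y)).comp
        (-ContinuousLinearMap.id ℝ E3)))) y :=
    ((((hasFDerivAt_id (y : E3)).const_sub (x : E3)).norm_sq.const_add ε).log hne).neg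
  rw [hd.fderiv, gradKernel, inner_smul_left, Subtype.dist_eq, dist_eq_norm]
  simp [inner_sub_left, inner_smul_left, hw]
  ring

end Sphere

section RegularizedEnergy

variable {ε : ℝ} {m : S2 → ℝ} {F : E3 → ℝ}

/-- The regularized logarithmic potential of the density `m`. -/
def logPotential (ε : ℝ) (m : S2 → ℝ) (y : S2) : ℝ := ∫ x, m x * logKernel ε x y ∂sigma2

/-- Twice the spherical gradient of `logPotential ε m`. -/
def logField (ε : ℝ) (m : S2 → ℝ) (y : S2) : E3 := ∫ x, m x • gradKernel ε x y ∂sigma2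

/-- The average of `m` against the approximate identity `deltaKernel ε`. -/
def smoothing (ε : ℝ) (m : S2 → ℝ) (y : S2) : ℝ := ∫ x, m x * deltaKernel ε x y ∂sigma2

lemma continuous_logPotential (hε : 0 < ε) (hm : Integrable m sigma2) :
    Continuous (logPotential ε m) :=
  continuous_integral_smul_kernel hm (continuous_logKernel hε)

lemma continuous_logField (hε : 0 < ε) (hm : Integrable m sigma2) : Continuous (logField ε m) :=
  continuous_integral_smul_kernel hm (continuous_gradKernel hε)

lemma continuous_smoothing (hε : 0 < ε) (hm : Integrable m sigma2) :
    Continuous (smoothing ε m) :=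
  continuous_integral_smul_kernel hm (continuous_deltaKernel hε)

lemma integral_mul_smoothing (hε : 0 < ε) (hm : Integrable m sigma2) {g : S2 → ℝ}
    (hg : Continuous g) :
    ∫ y, g y * smoothing ε m y ∂sigma2 = ∫ x, m x * smoothing ε g x ∂sigma2 := by
  have hK : Continuous (uncurry fun x y => g y * deltaKernel ε x y) :=
    (hg.comp continuous_snd).mul (continuous_deltaKernel hε)
  calc
    _ = ∫ y, ∫ x, m x * (g y * deltaKernel ε x y) ∂sigma2 ∂sigma2 := by
      simp only [smoothing, ← integral_const_mul, mul_left_comm]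
    _ = _ := by
      rw [integral_integral_mul_kernel hm hK]
      simp only [smoothing, deltaKernel_comm ε]

theorem integral_fderiv_logField (hε : 0 < ε) (hm : Integrable m sigma2)
    (hm0 : ∫ x, m x ∂sigma2 = 0) (hF : ∀ y : S2, ContDiffAt ℝ 1 F y) :
    ∫ y : S2, fderiv ℝ F y (logField ε m y) ∂sigma2 =
      ∫ y : S2, F y * smoothing ε m y ∂sigma2 := by
  have hFc := continuous_restrict_of_contDiffAt hF
  have hF'c := continuous_fderiv_of_contDiffAt hF
  have hV := continuous_gradKernel hε
  have hp := continuous_deltaKernel hε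
  have hgrad : Continuous (uncurry fun x y : S2 => fderiv ℝ F y (gradKernel ε x y)) :=
    (hF'c.comp continuous_snd).clm_apply hV
  have hdelta : Continuous (uncurry fun x y : S2 => F y * (deltaKernel ε x y - 1)) :=
    (hFc.comp continuous_snd).mul (hp.sub continuous_const)
  calc
    _ = ∫ y : S2, ∫ x, m x * fderiv ℝ F y (gradKernel ε x y) ∂sigma2 ∂sigma2 := by
      congr with y
      rw [logField, ← (fderiv ℝ F y).integral_comp_comm (integrable_smul_kernel hm hV y)]
      simp only [map_smul, smul_eq_mul]
    _ = ∫ y : S2, ∫ x, m x * (F y * (deltaKernel ε x y - 1)) ∂sigma2 ∂sigma2 := by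
      rw [integral_integral_mul_kernel hm hgrad, integral_integral_mul_kernel hm hdelta]
      simp only [integral_fderiv_gradKernel hε _ hF]
    _ = _ := by
      congr with y
      have hint : Integrable (fun x => m x * deltaKernel ε x y) sigma2 :=
        integrable_smul_kernel hm hp y
      rw [smoothing, ← integral_const_mul, ← sub_zero (∫ x, F y * _ ∂sigma2),
        ← mul_zero (F y), ← hm0, ← integral_const_mul, ← integral_sub (hint.const_mul _)
          (hm.const_mul _)]
      congr with x
      ring

lemma inner_logField_self (y : S2) : ⟪(y : E3), logField ε m y⟫_ℝ = 0 := by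
  by_cases h : Integrable (fun x => m x • gradKernel ε x y) sigma2
  · rw [logField, ← integral_inner h]
    simp [gradKernel, inner_smul_right, inner_sub_right, real_inner_comm]
  · rw [logField, integral_undef h, inner_zero_right]

theorem integral_norm_sq_logField (hε : 0 < ε) (hm : Integrable m sigma2)
    (hm0 : ∫ x, m x ∂sigma2 = 0) :
    ∫ y, ‖logField ε m y‖ ^ 2 ∂sigma2 =
      2 * ∫ y, logPotential ε m y * smoothing ε m y ∂sigma2 := by
  have hW := continuous_logField hε hm
  have hP := continuous_smoothing hε hm
  have hV := continuous_gradKernel hε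
  have hG := continuous_logKernel hε
  have hgrad : Continuous (uncurry fun x y => ⟪gradKernel ε x y, logField ε m y⟫_ℝ) :=
    hV.inner (hW.comp continuous_snd)
  have hlog : Continuous (uncurry fun x y => 2 * (logKernel ε x y * smoothing ε m y)) :=
    continuous_const.mul (hG.mul (hP.comp continuous_snd))
  have hC1 (x : S2) : ContDiff ℝ 1 fun v : E3 => -log (ε + ‖(x : E3) - v‖ ^ 2) := by
    have hne (v : E3) : ε + ‖(x : E3) - v‖ ^ 2 ≠ 0 := by positivity
    exact ((contDiff_const.add ((contDiff_const.sub contDiff_id).norm_sq ℝ)).log hne).neg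
  calc
    _ = ∫ y, ∫ x, m x * ⟪gradKernel ε x y, logField ε m y⟫_ℝ ∂sigma2 ∂sigma2 := by
      congr with y
      rw [← real_inner_self_eq_norm_sq]
      nth_rw 2 [logField]
      rw [← integral_inner (integrable_smul_kernel hm hV y)]
      simp only [inner_smul_right, real_inner_comm]
    _ = ∫ y, ∫ x, m x * (2 * (logKernel ε x y * smoothing ε m y)) ∂sigma2 ∂sigma2 := by
      rw [integral_integral_mul_kernel hm hgrad, integral_integral_mul_kernel hm hlog]
      congr with x
      have h := integral_fderiv_logField hε hm hm0 fun _ => (hC1 x).contDiffAt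
      simp only [fderiv_log_dist_sq hε x _ (inner_logField_self _)] at h
      rw [h]
      congr with y
      rw [logKernel, Subtype.dist_eq, dist_eq_norm]
      ring
    _ = _ := by
      rw [← integral_const_mul]
      congr with y
      rw [logPotential, ← integral_mul_const, ← integral_const_mul]
      congr with x
      ring

lemma sq_integral_le_integral_sq {Ω : Type*} [MeasurableSpace Ω] {μ : Measure Ω}
    [IsProbabilityMeasure μ] {g : Ω → ℝ} (hg : MemLp g 2 μ) :
    (∫ ω, g ω ∂μ) ^ 2 ≤ ∫ ω, g ω ^ 2 ∂μ := by
  have h := ProbabilityTheory.variance_nonneg g μ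
  rw [ProbabilityTheory.variance_eq_sub hg] at h
  simpa using h

theorem sq_integral_mul_smoothing_le (hε : 0 < ε) (hm : Integrable m sigma2)
    (hm0 : ∫ x, m x ∂sigma2 = 0) (hF : ∀ y : S2, ContDiffAt ℝ 1 F y) {L : ℝ}
    (hL : ∀ y : S2, ‖fderiv ℝ F y‖ ≤ L) :
    (∫ y : S2, F y * smoothing ε m y ∂sigma2) ^ 2 ≤
      2 * L ^ 2 * ∫ y, logPotential ε m y * smoothing ε m y ∂sigma2 := by
  have hW := continuous_logField hε hm
  have hF'W : Continuous fun y : S2 => fderiv ℝ F y (logField ε m y) :=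
    (continuous_fderiv_of_contDiffAt hF).clm_apply hW
  calc
    _ ≤ ∫ y : S2, fderiv ℝ F y (logField ε m y) ^ 2 ∂sigma2 := by
      rw [← integral_fderiv_logField hε hm hm0 hF]
      exact sq_integral_le_integral_sq
        (hF'W.memLp_of_hasCompactSupport (HasCompactSupport.of_compactSpace _))
    _ ≤ ∫ y : S2, L ^ 2 * ‖logField ε m y‖ ^ 2 ∂sigma2 := by
      refine integral_mono (integrable_of_continuous (hF'W.pow 2))
        (integrable_of_continuous (continuous_const.mul (hW.norm.pow 2))) fun y => ?_
      rw [← mul_pow, ← sq_abs]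
      exact pow_le_pow_left₀ (abs_nonneg _) ((fderiv ℝ F y).le_of_opNorm_le (hL y) _) 2
    _ = _ := by
      rw [integral_const_mul, integral_norm_sq_logField hε hm hm0]
      ring

end RegularizedEnergy

section Limit

variable {ε : ℝ}

lemma deltaKernel_nonneg (hε : 0 < ε) (x y : S2) : 0 ≤ deltaKernel ε x y := by
  unfold deltaKernel
  positivity

lemma deltaKernel_le (hε : 0 < ε) {r : ℝ} (hr : 0 < r) {x y : S2} (hxy : r ≤ dist x y) :
    deltaKernel ε x y ≤ (4 * ε + ε ^ 2) / r ^ 4 := by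
  unfold deltaKernel
  gcongr
  calc r ^ 4 = (r ^ 2) ^ 2 := by ring
    _ ≤ (ε + dist x y ^ 2) ^ 2 := by gcongr; nlinarith

lemma integrable_deltaKernel (hε : 0 < ε) (y : S2) :
    Integrable (fun x => deltaKernel ε x y) sigma2 :=
  integrable_of_continuous ((continuous_deltaKernel hε).uncurry_right y)

lemma integral_deltaKernel_left (hε : 0 < ε) (y : S2) :
    ∫ x, deltaKernel ε x y ∂sigma2 = 1 := by
  simp only [deltaKernel_comm ε _ y, integral_deltaKernel hε y]

lemma abs_smoothing_sub_le (hε : 0 < ε) {g : S2 → ℝ} (hg : Continuous g) (y : S2) {a : ℝ} {A η : ℝ}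
    (hA : ∀ x, |g x - a| * deltaKernel ε x y ≤ η * deltaKernel ε x y + A) :
    |smoothing ε g y - a| ≤ η + A := by
  have hδ := integrable_deltaKernel hε y
  have hgδ : Integrable (fun x => g x * deltaKernel ε x y) sigma2 :=
    integrable_of_continuous (hg.mul ((continuous_deltaKernel hε).uncurry_right y))
  calc
    _ = |∫ x, (g x - a) * deltaKernel ε x y ∂sigma2| := by
      simp only [sub_mul]
      rw [integral_sub hgδ (hδ.const_mul a), integral_const_mul, integral_deltaKernel_left hε,
        mul_one, smoothing]
    _ ≤ ∫ x, (η * deltaKernel ε x y + A) ∂sigma2 := by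
      rw [← norm_eq_abs]
      refine norm_integral_le_of_norm_le ((hδ.const_mul η).add (integrable_const A))
        (.of_forall fun x => ?_)
      rw [norm_mul, norm_eq_abs, norm_eq_abs, abs_of_nonneg (deltaKernel_nonneg hε x y)]
      exact hA x
    _ = η + A := by
      rw [integral_add (hδ.const_mul η) (integrable_const A), integral_const_mul,
        integral_deltaKernel_left hε]
      simp

/- Split according to whether `|x - y|` exceeds the modulus of continuity `r` of `g₀`. -/
lemma abs_smoothing_sub_le_of_modulus (hε : 0 < ε) {g g₀ : S2 → ℝ} (hg : Continuous g) {y : S2}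
    {r η D : ℝ} (hr : 0 < r) (hclose : ∀ x, |g x - g₀ x| ≤ η)
    (hmod : ∀ x, dist x y < r → |g₀ x - g₀ y| ≤ η) (hD : ∀ x, |g₀ x - g₀ y| ≤ D) :
    |smoothing ε g y - g₀ y| ≤ 2 * η + D * ((4 * ε + ε ^ 2) / r ^ 4) := by
  refine abs_smoothing_sub_le hε hg y fun x => ?_
  have hη : 0 ≤ η := (abs_nonneg _).trans (hclose y)
  have hD0 : 0 ≤ D := (abs_nonneg _).trans (hD y)
  have hδ := deltaKernel_nonneg hε x y
  have hgx : |g x - g₀ y| ≤ η + |g₀ x - g₀ y| := by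
    linarith [hclose x, abs_sub_le (g x) (g₀ x) (g₀ y)]
  rcases lt_or_ge (dist x y) r with hxy | hxy
  · calc _ ≤ 2 * η * deltaKernel ε x y := by gcongr; linarith [hmod x hxy]
      _ ≤ _ := le_add_of_nonneg_right (by positivity)
  · calc _ ≤ (2 * η + D) * deltaKernel ε x y := by gcongr; linarith [hD x]
      _ ≤ _ := by
        rw [add_mul]
        gcongr
        exact deltaKernel_le hε hr hxy

theorem tendstoUniformly_smoothing {g : ℝ → S2 → ℝ} {g₀ : S2 → ℝ}
    (hg : ∀ ε > 0, Continuous (g ε)) (hlim : TendstoUniformly g g₀ (𝓝[>] 0)) :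
    TendstoUniformly (fun ε => smoothing ε (g ε)) g₀ (𝓝[>] 0) := by
  have hev : ∀ᶠ ε in 𝓝[>] (0 : ℝ), Continuous (g ε) := eventually_mem_nhdsWithin.mono hg
  have hg₀ : Continuous g₀ := hlim.continuous hev.frequently
  obtain ⟨B, hB⟩ := (isCompact_range hg₀).isBounded.exists_norm_le
  have hdiff (x y : S2) : |g₀ x - g₀ y| ≤ 2 * B := by
    have hx : |g₀ x| ≤ B := hB _ ⟨x, rfl⟩
    have hy : |g₀ y| ≤ B := hB _ ⟨y, rfl⟩
    linarith [abs_sub (g₀ x) (g₀ y)]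
  rw [Metric.tendstoUniformly_iff] at hlim ⊢
  intro η hη
  obtain ⟨r, hr, hmod⟩ := Metric.uniformContinuous_iff.1
    (CompactSpace.uniformContinuous_of_continuous hg₀) (η / 4) (by positivity)
  have htail : Tendsto (fun ε : ℝ => 2 * (η / 4) + 2 * B * ((4 * ε + ε ^ 2) / r ^ 4)) (𝓝[>] 0)
      (𝓝 (2 * (η / 4))) := by
    have hc : Continuous fun ε : ℝ => 2 * (η / 4) + 2 * B * ((4 * ε + ε ^ 2) / r ^ 4) := by
      fun_prop
    exact (hc.tendsto' 0 _ (by simp)).mono_left nhdsWithin_le_nhds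
  filter_upwards [self_mem_nhdsWithin, hlim (η / 4) (by positivity),
    htail.eventually_lt_const (by linarith : 2 * (η / 4) < η)] with ε (hε : 0 < ε) hclose hlt y
  rw [dist_comm, dist_eq]
  refine (abs_smoothing_sub_le_of_modulus hε (hg ε hε) hr (fun x => ?_)
    (fun x hx => (hmod hx).le) fun x => hdiff x y).trans_lt hlt
  rw [abs_sub_comm]
  exact (hclose x).le

lemma tendsto_integral_mul_of_tendstoUniformly {X : Type*} [TopologicalSpace X] [CompactSpace X]
    [MeasurableSpace X] [OpensMeasurableSpace X] {μ : Measure X} {m : X → ℝ} (hm : Integrable m μ)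
    {ι : Type*} {l : Filter ι} [l.IsCountablyGenerated] {h : ι → X → ℝ} {h₀ : X → ℝ}
    (hh : ∀ᶠ i in l, Continuous (h i)) (hh₀ : Continuous h₀) (hlim : TendstoUniformly h h₀ l) :
    Tendsto (fun i => ∫ x, m x * h i x ∂μ) l (𝓝 (∫ x, m x * h₀ x ∂μ)) := by
  obtain ⟨B, hB⟩ := (isCompact_range hh₀).isBounded.exists_norm_le
  refine tendsto_integral_filter_of_dominated_convergence (fun x => ‖m x‖ * (B + 1)) ?_ ?_
    (hm.norm.mul_const _) (.of_forall fun x => (hlim.tendsto_at x).const_mul _)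
  · filter_upwards [hh] with i hi using hm.aestronglyMeasurable.mul hi.aestronglyMeasurable
  · filter_upwards [Metric.tendstoUniformly_iff.1 hlim 1 one_pos] with i hi
    refine .of_forall fun x => ?_
    rw [norm_mul]
    gcongr
    have h₀x : ‖h₀ x‖ ≤ B := hB _ ⟨x, rfl⟩
    have hix : ‖h i x - h₀ x‖ < 1 := by simpa [dist_eq_norm, norm_sub_rev] using hi x
    linarith [norm_le_norm_add_norm_sub' (h i x) (h₀ x)]

end Limit

section Potential

variable {ε M : ℝ} {m : S2 → ℝ}

lemma inv_sub_le_of_sq_ge {q t : ℝ} (ht : t ∈ Icc (-1 : ℝ) 1) (hq : 0 < q)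
    (hqt : 2 - 2 * t ≤ q ^ 2) :
    q⁻¹ - 3 / 2 ≤ 2 * t * q⁻¹ - (1 - t ^ 2) * q⁻¹ ^ 3 := by
  have hlower : 1 - t ≤ q := abs_le_of_sq_le_sq' (by nlinarith [ht.1, ht.2]) hq.le |>.2
  have hcubic : 0 ≤ (2 * t - 1 + 3 / 2 * q) * q ^ 2 - (1 - t ^ 2) := by
    nlinarith [mul_le_mul_of_nonneg_right hqt (by linarith [ht.1] : 0 ≤ 1 + t),
      mul_nonneg (sub_nonneg.2 hlower) (sq_nonneg q)]
  have hdiff : 2 * t * q⁻¹ - (1 - t ^ 2) * q⁻¹ ^ 3 - (q⁻¹ - 3 / 2) =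
      ((2 * t - 1 + 3 / 2 * q) * q ^ 2 - (1 - t ^ 2)) / q ^ 3 := by
    field_simp
    ring
  rw [← sub_nonneg, hdiff]
  positivity

lemma hasDerivAt_inv_sqrt {a t : ℝ} (hR : 0 < a + (2 - 2 * t)) :
    HasDerivAt (fun t => (√(a + (2 - 2 * t)))⁻¹) ((√(a + (2 - 2 * t)))⁻¹ ^ 3) t := by
  have hne := (sqrt_pos.2 hR).ne'
  have hlin : HasDerivAt (fun t : ℝ => a + (2 - 2 * t)) (-(2 * 1)) t :=
    (((hasDerivAt_id t).const_mul 2).const_sub 2).const_add a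
  refine ((hlin.sqrt hR.ne').fun_inv hne).congr_deriv ?_
  field_simp

/- The field of density `ψ(t) = (a + 2 - 2 t)^(-1/2)` has a divergence which dominates
`(a + |x - y|²)^(-1/2) - 3/2`. -/
lemma integral_inv_sqrt_add_dist_sq_le {a : ℝ} (ha : 0 < a) (y : S2) :
    ∫ x, (√(a + dist y x ^ 2))⁻¹ ∂sigma2 ≤ 3 / 2 := by
  let t (x : S2) := ⟪(y : E3), (x : E3)⟫_ℝ
  let q (x : S2) := √(a + dist y x ^ 2)
  have hq (x) : 0 < q x := sqrt_pos.2 (by positivity)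
  have hqc : Continuous fun x => (q x)⁻¹ := Continuous.inv₀ (by fun_prop) fun x => (hq x).ne'
  have hq2 (x) : 2 - 2 * t x ≤ q x ^ 2 := by
    rw [sq_sqrt (by positivity), sphere_dist_sq]
    linarith
  have hR {t : ℝ} (ht : t ∈ Icc (-1 : ℝ) 1) : 0 < a + (2 - 2 * t) := by linarith [ht.2]
  have key : ∫ x, (2 * t x * (q x)⁻¹ - (1 - t x ^ 2) * (q x)⁻¹ ^ 3) ∂sigma2 = 0 := by
    have hψ (t : ℝ) (ht : t ∈ Icc (-1 : ℝ) 1) :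
        ContDiffAt ℝ 1 (fun t => (√(a + (2 - 2 * t)))⁻¹) t :=
      have hlin : ContDiffAt ℝ 1 (fun t : ℝ => a + (2 - 2 * t)) t := by fun_prop
      (hlin.sqrt (hR ht).ne').inv (sqrt_pos.2 (hR ht)).ne'
    have hdiv := isRotationInvariant_sigma2.integral_zonal_divergence y hψ
    simp only [(hasDerivAt_inv_sqrt (hR (real_inner_mem_Icc y _))).deriv,
      finrank_euclideanSpace_fin] at hdiv
    have htwo : ((3 : ℕ) : ℝ) - 1 = 2 := by norm_num
    rw [htwo] at hdiv
    simpa only [t, q, sphere_dist_sq] using hdiv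
  rw [← sub_nonpos, ← key]
  calc
    _ = ∫ x, ((q x)⁻¹ - 3 / 2) ∂sigma2 := by
      rw [integral_sub (integrable_of_continuous hqc) (integrable_const _)]
      simp [q]
    _ ≤ _ := by
      have hdc : Continuous fun x => 2 * t x * (q x)⁻¹ - (1 - t x ^ 2) * (q x)⁻¹ ^ 3 := by
        fun_prop (disch := exact fun x => (hq x).ne')
      exact integral_mono (integrable_of_continuous (hqc.sub continuous_const))
        (integrable_of_continuous hdc) fun x =>
          inv_sub_le_of_sq_ge (real_inner_mem_Icc y x) (hq x) (hq2 x)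

lemma lintegral_inv_edist_le (y : S2) : ∫⁻ x, (edist x y)⁻¹ ∂sigma2 ≤ 3 / 2 := by
  let a (n : ℕ) : ℝ := 1 / (n + 1)
  have ha (n) : 0 < a n := by positivity
  let k (n : ℕ) (x : S2) : ℝ := √(a n + dist y x ^ 2)
  have hk (n) (x) : 0 < k n x := sqrt_pos.2 (add_pos_of_pos_of_nonneg (ha n) (by positivity))
  have hkc (n) : Continuous (k n) := by fun_prop
  have hlim (x : S2) : Tendsto (fun n => (ENNReal.ofReal (k n x))⁻¹) atTop (𝓝 (edist x y)⁻¹) := by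
    have hc : Continuous fun a : ℝ => √(a + dist y x ^ 2) := by fun_prop
    rw [edist_comm, edist_dist]
    refine ((ENNReal.continuous_ofReal.tendsto _).comp ?_).inv
    exact (hc.tendsto' 0 _ (by simp)).comp tendsto_one_div_add_atTop_nhds_zero_nat
  calc
    _ = ∫⁻ x, liminf (fun n => (ENNReal.ofReal (k n x))⁻¹) atTop ∂sigma2 := by
      simp only [(hlim _).liminf_eq]
    _ ≤ liminf (fun n => ∫⁻ x, (ENNReal.ofReal (k n x))⁻¹ ∂sigma2) atTop :=
      lintegral_liminf_le fun n => (hkc n).measurable.ennreal_ofReal.inv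
    _ ≤ liminf (fun _ : ℕ => (3 / 2 : ℝ≥0∞)) atTop := by
      refine liminf_le_liminf (.of_forall fun n => ?_)
      have hint : Integrable (fun x => (k n x)⁻¹) sigma2 :=
        integrable_of_continuous ((hkc n).inv₀ fun x => (hk n x).ne')
      simp only [← ENNReal.ofReal_inv_of_pos (hk n _)]
      rw [← ofReal_integral_eq_lintegral_ofReal hint (.of_forall fun x => (inv_pos.2 (hk n x)).le)]
      refine (ENNReal.ofReal_le_ofReal (integral_inv_sqrt_add_dist_sq_le (ha n) y)).trans_eq ?_
      rw [ENNReal.ofReal_div_of_pos two_pos]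
      simp
    _ = 3 / 2 := liminf_const _

lemma measurable_inv_edist (y : S2) : Measurable fun x : S2 => (edist x y)⁻¹ := by fun_prop

lemma lintegral_inv_edist_ne_top (y : S2) : ∫⁻ x, (edist x y)⁻¹ ∂sigma2 ≠ ∞ :=
  ne_top_of_le_ne_top (by finiteness) (lintegral_inv_edist_le y)

lemma ae_ne_sigma2 (y : S2) : ∀ᵐ x ∂sigma2, x ≠ y := by
  filter_upwards [ae_lt_top (measurable_inv_edist y) (lintegral_inv_edist_ne_top y)] with x hx hxy
  simp [hxy] at hx

lemma toReal_inv_edist (x y : S2) : ((edist x y)⁻¹).toReal = (dist x y)⁻¹ := by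
  rw [ENNReal.toReal_inv, dist_edist]

lemma integrable_inv_dist (y : S2) : Integrable (fun x => (dist x y)⁻¹) sigma2 := by
  simpa only [toReal_inv_edist] using integrable_toReal_of_lintegral_ne_top
    (measurable_inv_edist y).aemeasurable (lintegral_inv_edist_ne_top y)

lemma integral_inv_dist_le (y : S2) : ∫ x, (dist x y)⁻¹ ∂sigma2 ≤ 3 / 2 := by
  have hfin := ae_lt_top (measurable_inv_edist y) (lintegral_inv_edist_ne_top y)
  have h := ENNReal.toReal_mono (by finiteness) (lintegral_inv_edist_le y)
  rw [← integral_toReal (measurable_inv_edist y).aemeasurable hfin] at h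
  simpa only [toReal_inv_edist, ENNReal.toReal_div, ENNReal.toReal_ofNat] using h

lemma abs_logKernel_sub_le (hε : 0 ≤ ε) {x y : S2} (hxy : x ≠ y) :
    |logKernel ε x y - logKernel 0 x y| ≤ √ε * (dist x y)⁻¹ := by
  have hd := dist_pos.2 hxy
  have hs := sqrt_nonneg ε
  have hlog : log (ε + dist x y ^ 2) - log (dist x y ^ 2) ≤ 2 * (√ε * (dist x y)⁻¹) := by
    calc
      _ ≤ log ((√ε + dist x y) ^ 2) - log (dist x y ^ 2) := by
        gcongr
        rw [add_sq, sq_sqrt hε]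
        nlinarith
      _ = 2 * log (1 + √ε * (dist x y)⁻¹) := by
        rw [← log_div (by positivity) (by positivity), ← div_pow, log_pow, add_div,
          div_self hd.ne', add_comm, div_eq_mul_inv]
        push_cast
        ring
      _ ≤ _ := by
        gcongr
        linarith [log_le_sub_one_of_pos (x := 1 + √ε * (dist x y)⁻¹) (by positivity)]
  have hmono : log (dist x y ^ 2) ≤ log (ε + dist x y ^ 2) := by gcongr; linarith
  rw [logKernel, logKernel, zero_add, abs_le]
  constructor <;> linarith

lemma integrable_logKernel_zero (y : S2) : Integrable (fun x => logKernel 0 x y) sigma2 := by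
  have hone : Integrable (fun x => logKernel 1 x y) sigma2 :=
    integrable_of_continuous ((continuous_logKernel one_pos).uncurry_right y)
  have hmeas : Measurable fun x => logKernel 1 x y - logKernel 0 x y := by
    unfold logKernel
    fun_prop
  have hsub : Integrable (fun x => logKernel 1 x y - logKernel 0 x y) sigma2 := by
    refine (integrable_inv_dist y).mono' hmeas.aestronglyMeasurable ?_
    filter_upwards [ae_ne_sigma2 y] with x hxy
    simpa using abs_logKernel_sub_le zero_le_one hxy
  exact (hone.sub hsub).congr (.of_forall fun x => sub_sub_cancel _ _)

lemma abs_logPotential_sub_le (hε : 0 < ε) (hm : Integrable m sigma2)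
    (hM : ∀ᵐ x ∂sigma2, |m x| ≤ M) (y : S2) :
    |logPotential ε m y - logPotential 0 m y| ≤ M * √ε * (3 / 2) := by
  have hε_int : Integrable (fun x => m x * logKernel ε x y) sigma2 :=
    integrable_smul_kernel hm (continuous_logKernel hε) y
  have h0_int : Integrable (fun x => m x * logKernel 0 x y) sigma2 :=
    (integrable_logKernel_zero y).bdd_mul hm.aestronglyMeasurable hM
  obtain ⟨x₀, hx₀⟩ := hM.exists
  have hM0 : 0 ≤ M := (abs_nonneg _).trans hx₀
  calc
    _ = ‖∫ x, m x * (logKernel ε x y - logKernel 0 x y) ∂sigma2‖ := by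
      simp only [mul_sub]
      rw [integral_sub hε_int h0_int, norm_eq_abs, logPotential, logPotential]
    _ ≤ ∫ x, M * √ε * (dist x y)⁻¹ ∂sigma2 := by
      refine norm_integral_le_of_norm_le ((integrable_inv_dist y).const_mul _) ?_
      filter_upwards [hM, ae_ne_sigma2 y] with x hx hxy
      rw [norm_mul, mul_assoc]
      exact mul_le_mul hx (abs_logKernel_sub_le hε.le hxy) (abs_nonneg _) hM0
    _ ≤ _ := by
      rw [integral_const_mul]
      gcongr
      exact integral_inv_dist_le y

theorem tendstoUniformly_logPotential (hm : Integrable m sigma2)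
    (hM : ∀ᵐ x ∂sigma2, |m x| ≤ M) :
    TendstoUniformly (fun ε => logPotential ε m) (logPotential 0 m) (𝓝[>] 0) := by
  rw [Metric.tendstoUniformly_iff]
  intro η hη
  have hc : Continuous fun ε : ℝ => M * √ε * (3 / 2) := by fun_prop
  have hlim : Tendsto (fun ε : ℝ => M * √ε * (3 / 2)) (𝓝[>] 0) (𝓝 0) :=
    (hc.tendsto' 0 _ (by simp)).mono_left nhdsWithin_le_nhds
  filter_upwards [self_mem_nhdsWithin, hlim.eventually_lt_const hη] with ε (hε : 0 < ε) hlt y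
  rw [dist_comm, dist_eq]
  exact (abs_logPotential_sub_le hε hm hM y).trans_lt hlt

theorem sq_integral_mul_le_of_contDiffAt (hm : Integrable m sigma2) (hM : ∀ᵐ x ∂sigma2, |m x| ≤ M)
    (hm0 : ∫ x, m x ∂sigma2 = 0) {F : E3 → ℝ} (hF : ∀ y : S2, ContDiffAt ℝ 1 F y) {L : ℝ}
    (hL : ∀ y : S2, ‖fderiv ℝ F y‖ ≤ L) :
    (∫ x : S2, m x * F x ∂sigma2) ^ 2 ≤ 2 * L ^ 2 * ∫ x, m x * logPotential 0 m x ∂sigma2 := by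
  have hFc := continuous_restrict_of_contDiffAt hF
  have hU (ε : ℝ) (hε : 0 < ε) := continuous_logPotential hε hm
  have hconv {g : ℝ → S2 → ℝ} {g₀ : S2 → ℝ} (hg : ∀ ε > 0, Continuous (g ε))
      (hlim : TendstoUniformly g g₀ (𝓝[>] 0)) :
      Tendsto (fun ε => ∫ y, g ε y * smoothing ε m y ∂sigma2) (𝓝[>] 0)
        (𝓝 (∫ x, m x * g₀ x ∂sigma2)) := by
    have hev : ∀ᶠ ε in 𝓝[>] (0 : ℝ), Continuous (g ε) := eventually_mem_nhdsWithin.mono hg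
    refine Tendsto.congr' ?_ (tendsto_integral_mul_of_tendstoUniformly hm
      (eventually_mem_nhdsWithin.mono fun ε hε => ?_) (hlim.continuous hev.frequently)
      (tendstoUniformly_smoothing hg hlim))
    · filter_upwards [self_mem_nhdsWithin] with ε (hε : 0 < ε)
      rw [integral_mul_smoothing hε hm (hg ε hε)]
    · exact continuous_smoothing hε (integrable_of_continuous (hg ε hε))
  have hconst : TendstoUniformly (fun (_ : ℝ) (y : S2) => F y) (fun y => F y) (𝓝[>] 0) :=
    fun _ hs => .of_forall fun _ _ => refl_mem_uniformity hs
  refine le_of_tendsto_of_tendsto ((hconv (fun _ _ => hFc) hconst).pow 2)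
    ((hconv hU (tendstoUniformly_logPotential hm hM)).const_mul (2 * L ^ 2)) ?_
  filter_upwards [self_mem_nhdsWithin] with ε (hε : 0 < ε)
  exact sq_integral_mul_smoothing_le hε hm hm0 hF hL

end Potential

section Mollification

variable {E V : Type*} [NormedAddCommGroup E] [NormedSpace ℝ E] [FiniteDimensional ℝ E]
  [NormedAddCommGroup V] [NormedSpace ℝ V]

open scoped Convolution

lemma norm_normed_convolution_sub_le [MeasurableSpace E] [BorelSpace E] {μ : Measure E}
    [μ.IsAddHaarMeasure] (φ : ContDiffBump (0 : E)) {h : E → V}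
    (hh : LocallyIntegrable h μ) {x y : E} {C : ℝ}
    (hC : ∀ t ∈ ball 0 φ.rOut, ‖h (x - t) - h (y - t)‖ ≤ C) :
    ‖(φ.normed μ ⋆[ContinuousLinearMap.lsmul ℝ ℝ, μ] h) x -
      (φ.normed μ ⋆[ContinuousLinearMap.lsmul ℝ ℝ, μ] h) y‖ ≤ C := by
  have hint (z : E) : Integrable (fun t => φ.normed μ t • h (z - t)) μ :=
    φ.hasCompactSupport_normed.convolutionExists_left (ContinuousLinearMap.lsmul ℝ ℝ)
      φ.continuous_normed hh z
  calc
    _ = ‖∫ t, φ.normed μ t • (h (x - t) - h (y - t)) ∂μ‖ := by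
      simp only [convolution_def, ContinuousLinearMap.lsmul_apply, smul_sub]
      rw [integral_sub (hint x) (hint y)]
    _ ≤ ∫ t, φ.normed μ t * C ∂μ := by
      refine norm_integral_le_of_norm_le (φ.integrable_normed.mul_const _)
        (.of_forall fun t => ?_)
      rw [norm_smul, norm_of_nonneg (φ.nonneg_normed t)]
      by_cases ht : t ∈ ball 0 φ.rOut
      · exact mul_le_mul_of_nonneg_left (hC t ht) (φ.nonneg_normed t)
      · rw [← φ.support_normed_eq (μ := μ), notMem_support] at ht
        simp [ht]
    _ = C := by rw [integral_mul_const, φ.integral_normed, one_mul]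

theorem exists_contDiff_of_lipschitzOnWith_ball [CompleteSpace V] {h : E → V} (hh : Continuous h)
    {s : Set E} {r : ℝ} (hr : 0 < r) {L : ℝ≥0} (hL : ∀ y ∈ s, LipschitzOnWith L h (ball y r)) :
    ∃ F : E → V, ContDiff ℝ 1 F ∧ ∀ y ∈ s, dist (F y) (h y) ≤ L * r ∧ ‖fderiv ℝ F y‖ ≤ L := by
  borelize E
  let μ : Measure E := Measure.addHaar
  let φ : ContDiffBump (0 : E) := ⟨r / 4, r / 2, by positivity, by linarith⟩
  have hli : LocallyIntegrable h μ := hh.locallyIntegrable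
  refine ⟨φ.normed μ ⋆[ContinuousLinearMap.lsmul ℝ ℝ, μ] h,
    φ.hasCompactSupport_normed.contDiff_convolution_left _ φ.contDiff_normed hli,
    fun y hy => ⟨?_, ?_⟩⟩
  · refine φ.dist_normed_convolution_le hh.aestronglyMeasurable fun u hu => ?_
    have hur : dist u y < r := (mem_ball.1 hu).trans (half_lt_self hr)
    exact ((hL y hy).dist_le_mul u (mem_ball.2 hur) y (mem_ball_self hr)).trans (by gcongr)
  · refine norm_fderiv_le_of_lip' ℝ L.coe_nonneg ?_
    filter_upwards [ball_mem_nhds y (half_pos hr)] with x hx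
    refine norm_normed_convolution_sub_le φ hli fun t (ht : t ∈ ball 0 (r / 2)) => ?_
    rw [mem_ball_iff_norm] at hx
    rw [mem_ball_zero_iff] at ht
    have hyt : y - t ∈ ball y r := by
      rw [mem_ball_iff_norm, sub_sub_cancel_left, norm_neg]
      linarith
    have hxt : x - t ∈ ball y r := by
      rw [mem_ball_iff_norm, sub_right_comm]
      linarith [norm_sub_le (x - y) t]
    simpa [dist_eq_norm] using (hL y hy).dist_le_mul _ hxt _ hyt

end Mollification

section LipschitzApproximation

variable {E : Type*} [NormedAddCommGroup E] [InnerProductSpace ℝ E]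

open InnerProductGeometry

lemma le_sin_mul_one_add_sin_sq {x : ℝ} (h0 : 0 ≤ x) (h1 : x ≤ π / 2) :
    x ≤ sin x * (1 + sin x ^ 2) := by
  rcases h0.eq_or_lt with rfl | hpos
  · simp
  have hlower : x ≤ π / 2 * sin x := by
    have h := mul_le_sin h0 h1
    rwa [div_mul_eq_mul_div, div_le_iff₀ pi_pos, ← le_div_iff₀' two_pos, mul_comm,
      mul_div_right_comm] at h
  have hsin : 0 ≤ sin x := sin_nonneg_of_nonneg_of_le_pi h0 (by linarith)
  have hcube : x ^ 3 ≤ 6 * sin x ^ 3 := by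
    have hπ : π / 2 ≤ 7 / 4 := by linarith [pi_lt_d2]
    calc x ^ 3 ≤ (7 / 4 * sin x) ^ 3 := by gcongr; exact hlower.trans (by gcongr)
      _ ≤ 6 * sin x ^ 3 := by rw [mul_pow]; gcongr; norm_num
  linarith [sin_gt_sub_cube hpos]

lemma two_mul_sin_half_angle_le {a : ℝ} (ha : 0 ≤ a) {u w : E} (hu : a ≤ ‖u‖) (hw : a ≤ ‖w‖) :
    2 * a * sin (angle u w / 2) ≤ ‖u - w‖ := by
  refine le_of_sq_le_sq ?_ (norm_nonneg _)
  have hsq : ‖u - w‖ ^ 2 = (‖u‖ - ‖w‖) ^ 2 + 4 * (‖u‖ * ‖w‖) * sin (angle u w / 2) ^ 2 := by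
    rw [norm_sub_sq_real, ← cos_angle_mul_norm_mul_norm, sin_sq_eq_half_sub, mul_div_cancel₀]
    · ring
    · exact two_ne_zero
  calc (2 * a * sin (angle u w / 2)) ^ 2 = 4 * (a * a) * sin (angle u w / 2) ^ 2 := by ring
    _ ≤ 4 * (‖u‖ * ‖w‖) * sin (angle u w / 2) ^ 2 := by gcongr
    _ ≤ ‖u - w‖ ^ 2 := by rw [hsq]; exact le_add_of_nonneg_left (sq_nonneg _)

lemma eventually_angle_le {L : ℝ} (hL : 1 < L) :
    ∀ᶠ r in 𝓝[>] (0 : ℝ), ∀ u w : E, 1 - r ≤ ‖u‖ → 1 - r ≤ ‖w‖ → ‖u - w‖ ≤ r →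
      angle u w ≤ L * ‖u - w‖ := by
  have hc : ContinuousAt (fun r : ℝ => 1 / (1 - r) * (1 + (r / (2 * (1 - r))) ^ 2)) 0 := by
    have h1 : (1 : ℝ) - 0 ≠ 0 := by norm_num
    have h2 : 2 * ((1 : ℝ) - 0) ≠ 0 := by norm_num
    fun_prop (disch := assumption)
  have hlim := hc.tendsto.mono_left (nhdsWithin_le_nhds (s := Ioi 0))
  filter_upwards [self_mem_nhdsWithin, nhdsWithin_le_nhds (gt_mem_nhds one_pos),
    hlim.eventually_lt_const (by simpa using hL)] with r (hr : 0 < r) hr1 hrL u w hu hw huw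
  have hr' : 0 < 1 - r := sub_pos.2 hr1
  have hs : sin (angle u w / 2) ≤ ‖u - w‖ / (2 * (1 - r)) := by
    rw [le_div_iff₀' (by positivity)]
    exact two_mul_sin_half_angle_le hr'.le hu hw
  have hθ0 : 0 ≤ angle u w / 2 := by linarith [angle_nonneg u w]
  have hθ : angle u w / 2 ≤ π / 2 := by linarith [angle_le_pi u w]
  have hs0 : 0 ≤ sin (angle u w / 2) := sin_nonneg_of_nonneg_of_le_pi hθ0 (by linarith [pi_pos])
  have hangle := le_sin_mul_one_add_sin_sq hθ0 hθ
  calc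
    angle u w ≤ 2 * (sin (angle u w / 2) * (1 + sin (angle u w / 2) ^ 2)) := by linarith
    _ ≤ 2 * (‖u - w‖ / (2 * (1 - r)) * (1 + (r / (2 * (1 - r))) ^ 2)) := by
      gcongr
      exact hs.trans (by gcongr)
    _ = 1 / (1 - r) * (1 + (r / (2 * (1 - r))) ^ 2) * ‖u - w‖ := by field_simp
    _ ≤ L * ‖u - w‖ := by gcongr

lemma continuous_of_abs_sub_le_angle {f : sphere (0 : E) 1 → ℝ}
    (hf : ∀ x y : sphere (0 : E) 1, |f x - f y| ≤ angle (x : E) y) : Continuous f := by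
  refine continuous_iff_continuousAt.2 fun y => tendsto_iff_dist_tendsto_zero.2 ?_
  have hy : (y : E) ≠ 0 := ne_zero_of_mem_unit_sphere y
  have hangle : ContinuousAt (fun x : sphere (0 : E) 1 => angle (x : E) y) y :=
    (continuousAt_angle (x := ((y : E), (y : E))) hy hy).comp
      (f := fun x : sphere (0 : E) 1 => ((x : E), (y : E))) (by fun_prop)
  refine squeeze_zero (fun _ => dist_nonneg) (fun x => hf x y) ?_
  simpa [ContinuousAt, angle_self hy] using hangle

lemma exists_radial_extension {f : sphere (0 : E) 1 → ℝ} (hf : Continuous f) :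
    ∃ h : E → ℝ, Continuous h ∧ ∀ (y : sphere (0 : E) 1) (t : ℝ), 1 / 2 ≤ t → h (t • y) = f y := by
  obtain ⟨g, hg⟩ := ContinuousMap.exists_extension'
    (isClosed_sphere (x := (0 : E)) (ε := 1)).isClosedEmbedding_subtypeVal ⟨f, hf⟩
  refine ⟨fun u => g ((max ‖u‖ (1 / 2))⁻¹ • u), ?_, fun y t ht => ?_⟩
  · have (u : E) : max ‖u‖ (1 / 2) ≠ 0 := by positivity
    fun_prop (disch := assumption)
  · have ht0 : 0 < t := by linarith
    have hty : (max ‖t • (y : E)‖ (1 / 2))⁻¹ • t • (y : E) = y := by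
      rw [norm_smul, norm_eq_of_mem_sphere, mul_one, norm_of_nonneg ht0.le, max_eq_left ht,
        inv_smul_smul₀ ht0.ne']
    simp only [hty]
    exact congrFun hg y

lemma exists_lipschitzOnWith_ball_extension {f : sphere (0 : E) 1 → ℝ}
    (hf : ∀ x y : sphere (0 : E) 1, |f x - f y| ≤ angle (x : E) y) {L : ℝ≥0} (hL : 1 < L) :
    ∃ h : E → ℝ, Continuous h ∧ (∀ y : sphere (0 : E) 1, h y = f y) ∧
      ∀ᶠ r in 𝓝[>] (0 : ℝ), ∀ y ∈ sphere (0 : E) 1, LipschitzOnWith L h (ball y r) := by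
  obtain ⟨h, hh, hrad⟩ := exists_radial_extension (continuous_of_abs_sub_le_angle hf)
  refine ⟨h, hh, fun y => by simpa using hrad y 1 (by norm_num), ?_⟩
  have hdouble : Tendsto (fun r : ℝ => 2 * r) (𝓝[>] 0) (𝓝[>] 0) :=
    tendsto_nhdsWithin_iff.2 ⟨((continuous_const_mul 2).tendsto' 0 0 (mul_zero _)).mono_left
      nhdsWithin_le_nhds, eventually_mem_nhdsWithin.mono fun r (hr : 0 < r) => by simp [hr]⟩
  filter_upwards [hdouble.eventually (eventually_angle_le (E := E) (NNReal.one_lt_coe.2 hL)),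
    self_mem_nhdsWithin, nhdsWithin_le_nhds (gt_mem_nhds one_half_pos)] with r hangle
    (hr : 0 < r) hr2 y hy
  have hnorm {u : E} (hu : u ∈ ball y r) : 1 - r < ‖u‖ := by
    linarith [norm_sub_norm_le y u, norm_sub_rev y u, mem_ball_iff_norm.1 hu,
      mem_sphere_zero_iff_norm.1 hy]
  have hpolar {u : E} (hu : u ∈ ball y r) :
      ∃ (x : sphere (0 : E) 1) (t : ℝ), 1 / 2 ≤ t ∧ u = t • (x : E) := by
    have hu1 : 1 / 2 ≤ ‖u‖ := by linarith [hnorm hu]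
    have hu0 : ‖u‖ ≠ 0 := by positivity
    exact ⟨⟨‖u‖⁻¹ • u, by simp [norm_smul, hu0]⟩, ‖u‖, hu1, (smul_inv_smul₀ hu0 u).symm⟩
  refine LipschitzOnWith.of_dist_le_mul fun u hu w hw => ?_
  have huw : ‖u - w‖ ≤ 2 * r := by
    rw [← dist_eq_norm]
    linarith [dist_triangle_right u w y, mem_ball.1 hu, mem_ball.1 hw]
  have hangle := hangle u w (by linarith [hnorm hu]) (by linarith [hnorm hw]) huw
  obtain ⟨x, s, hs, rfl⟩ := hpolar hu
  obtain ⟨z, t, ht, rfl⟩ := hpolar hw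
  rw [angle_smul_left_of_pos _ _ (by linarith), angle_smul_right_of_pos _ _ (by linarith)]
    at hangle
  rw [dist_eq, dist_eq_norm, hrad x s hs, hrad z t ht]
  exact (hf x z).trans hangle

variable [FiniteDimensional ℝ E]

theorem exists_contDiff_approx_of_abs_sub_le_angle {f : sphere (0 : E) 1 → ℝ}
    (hf : ∀ x y : sphere (0 : E) 1, |f x - f y| ≤ angle (x : E) y) {L : ℝ≥0} (hL : 1 < L) {η : ℝ}
    (hη : 0 < η) :
    ∃ F : E → ℝ, ContDiff ℝ 1 F ∧
      ∀ y : sphere (0 : E) 1, |F y - f y| ≤ η ∧ ‖fderiv ℝ F y‖ ≤ L := by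
  obtain ⟨h, hh, hhf, hlip⟩ := exists_lipschitzOnWith_ball_extension hf hL
  have hsmall : ∀ᶠ r in 𝓝[>] (0 : ℝ), L * r < η :=
    (((continuous_const_mul (L : ℝ)).tendsto' 0 0 (mul_zero _)).mono_left
      nhdsWithin_le_nhds).eventually_lt_const hη
  have hpos : ∀ᶠ r in 𝓝[>] (0 : ℝ), 0 < r := self_mem_nhdsWithin
  obtain ⟨r, hr, hlip, hrη⟩ := (hpos.and (hlip.and hsmall)).exists
  obtain ⟨F, hF, hFh⟩ := exists_contDiff_of_lipschitzOnWith_ball hh hr hlip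
  refine ⟨F, hF, fun y => ⟨?_, (hFh y y.2).2⟩⟩
  rw [← hhf y, ← dist_eq]
  exact (hFh y y.2).1.trans hrη.le

end LipschitzApproximation

lemma dg_eq_angle (x y : S2) : dg x y = InnerProductGeometry.angle (x : E3) y := by
  simp [dg, InnerProductGeometry.angle]

lemma continuous_of_abs_sub_le_dg {f : S2 → ℝ} (hf : ∀ x y : S2, |f x - f y| ≤ dg x y) :
    Continuous f :=
  continuous_of_abs_sub_le_angle (by simpa only [dg_eq_angle] using hf)

theorem sq_integral_mul_le_of_abs_sub_le_dg {M : ℝ} {m : S2 → ℝ} (hm : Integrable m sigma2)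
    (hM : ∀ᵐ x ∂sigma2, |m x| ≤ M) (hm0 : ∫ x, m x ∂sigma2 = 0) {f : S2 → ℝ}
    (hf : ∀ x y : S2, |f x - f y| ≤ dg x y) :
    (∫ x : S2, m x * f x ∂sigma2) ^ 2 ≤ 2 * ∫ x, m x * logPotential 0 m x ∂sigma2 := by
  let ε (n : ℕ) : ℝ≥0 := 1 / (n + 1)
  have hε (n) : 0 < ε n := by positivity
  have hε_lim : Tendsto (fun n => (ε n : ℝ)) atTop (𝓝 0) := by
    simpa [ε] using tendsto_one_div_add_atTop_nhds_zero_nat (𝕜 := ℝ)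
  choose F hF hFf using fun n => exists_contDiff_approx_of_abs_sub_le_angle (E := E3) (f := f)
    (L := 1 + ε n) (by simpa only [dg_eq_angle] using hf)
    (lt_add_of_pos_right 1 (hε n)) (hε n)
  have hFc (n) : Continuous fun y : S2 => F n y := by
    have := (hF n).continuous
    fun_prop
  have hunif : TendstoUniformly (fun n (y : S2) => F n y) f atTop := by
    rw [Metric.tendstoUniformly_iff]
    intro η hη
    filter_upwards [hε_lim.eventually_lt_const hη] with n hn y
    rw [dist_comm]
    exact (hFf n y).1.trans_lt hn
  have hfc := continuous_of_abs_sub_le_dg hf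
  have hlim : Tendsto (fun n => 2 * ((1 + ε n : ℝ≥0) : ℝ) ^ 2 *
      ∫ x, m x * logPotential 0 m x ∂sigma2) atTop
      (𝓝 (2 * ∫ x, m x * logPotential 0 m x ∂sigma2)) := by
    simpa using (((hε_lim.const_add 1).pow 2).const_mul 2).mul_const _
  exact le_of_tendsto_of_tendsto
    ((tendsto_integral_mul_of_tendstoUniformly hm (.of_forall hFc) hfc hunif).pow 2) hlim
    (.of_forall fun n => sq_integral_mul_le_of_contDiffAt hm hM hm0
      (fun y => (hF n).contDiffAt) fun y => (hFf n y).2)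

section BoundedDensity

variable {α : Type*} [MeasurableSpace α] {μ : Measure α} [SigmaFinite μ] {C D : ℝ≥0}

lemma ae_toReal_rnDeriv_le_of_le_smul {P : Measure α} (h : P ≤ (C : ℝ≥0∞) • μ) :
    ∀ᵐ x ∂μ, (P.rnDeriv μ x).toReal ≤ C := by
  have hle : ∀ᵐ x ∂μ, P.rnDeriv μ x ≤ C := by
    refine ae_le_of_forall_setLIntegral_le_of_sigmaFinite (Measure.measurable_rnDeriv P μ)
      fun s _ _ => (Measure.setLIntegral_rnDeriv_le s).trans ?_
    rw [setLIntegral_const]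
    exact h s
  exact hle.mono fun x hx => ENNReal.toReal_le_coe_of_le_coe hx

lemma ae_abs_signedMeasure_rnDeriv_le {s : SignedMeasure α}
    (hpos : s.toJordanDecomposition.posPart ≤ (C : ℝ≥0∞) • μ)
    (hneg : s.toJordanDecomposition.negPart ≤ (D : ℝ≥0∞) • μ) :
    ∀ᵐ x ∂μ, |s.rnDeriv μ x| ≤ max C D := by
  filter_upwards [ae_toReal_rnDeriv_le_of_le_smul hpos, ae_toReal_rnDeriv_le_of_le_smul hneg]
    with x hx hx'
  exact abs_sub_le_of_nonneg_of_le ENNReal.toReal_nonneg (hx.trans (le_max_left _ _))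
    ENNReal.toReal_nonneg (hx'.trans (le_max_right _ _))

lemma integral_posPart_sub_integral_negPart_eq_integral_rnDeriv_mul {s : SignedMeasure α}
    (hpos : s.toJordanDecomposition.posPart ≪ μ) (hneg : s.toJordanDecomposition.negPart ≪ μ)
    {f : α → ℝ} (hf_pos : Integrable f s.toJordanDecomposition.posPart)
    (hf_neg : Integrable f s.toJordanDecomposition.negPart) :
    ∫ x, f x ∂s.toJordanDecomposition.posPart - ∫ x, f x ∂s.toJordanDecomposition.negPart =
      ∫ x, s.rnDeriv μ x * f x ∂μ := by
  rw [← integral_rnDeriv_smul hpos, ← integral_rnDeriv_smul hneg,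
    ← integral_sub ((integrable_rnDeriv_smul_iff hpos).2 hf_pos)
      ((integrable_rnDeriv_smul_iff hneg).2 hf_neg)]
  simp only [SignedMeasure.rnDeriv, smul_eq_mul, sub_mul]

lemma posPart_add_eq_add_negPart (P Q : Measure α) [IsFiniteMeasure P] [IsFiniteMeasure Q] :
    (P.toSignedMeasure - Q.toSignedMeasure).toJordanDecomposition.posPart + Q =
      P + (P.toSignedMeasure - Q.toSignedMeasure).toJordanDecomposition.negPart := by
  have h := (P.toSignedMeasure - Q.toSignedMeasure).toSignedMeasure_toJordanDecomposition
  rw [JordanDecomposition.toSignedMeasure, sub_eq_sub_iff_add_eq_add] at h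
  rwa [← Measure.toSignedMeasure_add, ← Measure.toSignedMeasure_add,
    Measure.toSignedMeasure_eq_toSignedMeasure_iff] at h

lemma posPart_toSignedMeasure_sub_le (P Q : Measure α) [IsFiniteMeasure P] [IsFiniteMeasure Q] :
    (P.toSignedMeasure - Q.toSignedMeasure).toJordanDecomposition.posPart ≤ P := by
  rw [Measure.toJordanDecomposition_toSignedMeasure_sub,
    Measure.jordanDecompositionOfToSignedMeasureSub_posPart]
  exact Measure.sub_le

lemma negPart_toSignedMeasure_sub_le (P Q : Measure α) [IsFiniteMeasure P] [IsFiniteMeasure Q] :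
    (P.toSignedMeasure - Q.toSignedMeasure).toJordanDecomposition.negPart ≤ Q := by
  rw [Measure.toJordanDecomposition_toSignedMeasure_sub,
    Measure.jordanDecompositionOfToSignedMeasureSub_negPart]
  exact Measure.sub_le

lemma integral_posPart_sub_integral_negPart_toSignedMeasure_sub {P Q : Measure α}
    [IsFiniteMeasure P] [IsFiniteMeasure Q] {f : α → ℝ} (hP : Integrable f P)
    (hQ : Integrable f Q) :
    ∫ x, f x ∂(P.toSignedMeasure - Q.toSignedMeasure).toJordanDecomposition.posPart -
        ∫ x, f x ∂(P.toSignedMeasure - Q.toSignedMeasure).toJordanDecomposition.negPart =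
      ∫ x, f x ∂P - ∫ x, f x ∂Q := by
  rw [sub_eq_sub_iff_add_eq_add,
    ← integral_add_measure (hP.mono_measure (posPart_toSignedMeasure_sub_le P Q)) hQ,
    ← integral_add_measure hP (hQ.mono_measure (negPart_toSignedMeasure_sub_le P Q)),
    posPart_add_eq_add_negPart]

end BoundedDensity

section Energy

variable {C D : ℝ≥0}

lemma continuous_logPotential_zero {M : ℝ} {m : S2 → ℝ} (hm : Integrable m sigma2)
    (hM : ∀ᵐ x ∂sigma2, |m x| ≤ M) : Continuous (logPotential 0 m) := by
  have hev : ∀ᶠ ε in 𝓝[>] (0 : ℝ), Continuous (logPotential ε m) :=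
    eventually_mem_nhdsWithin.mono fun ε hε => continuous_logPotential hε hm
  exact (tendstoUniformly_logPotential hm hM).continuous hev.frequently

lemma integral_G_eq_logPotential {P : Measure S2} [SigmaFinite P] (h : P ≪ sigma2) (x : S2) :
    ∫ y, G x y ∂P = logPotential 0 (fun y => (P.rnDeriv sigma2 y).toReal) x := by
  rw [logPotential, G_eq_logKernel_zero]
  simp only [logKernel_comm 0 x]
  exact (integral_rnDeriv_smul h).symm

lemma logPotential_zero_sub {M N : ℝ} {m n : S2 → ℝ} (hm : Integrable m sigma2)
    (hM : ∀ᵐ x ∂sigma2, |m x| ≤ M) (hn : Integrable n sigma2) (hN : ∀ᵐ x ∂sigma2, |n x| ≤ N)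
    (y : S2) :
    logPotential 0 (fun x => m x - n x) y = logPotential 0 m y - logPotential 0 n y := by
  simp only [logPotential, sub_mul]
  exact integral_sub ((integrable_logKernel_zero y).bdd_mul hm.aestronglyMeasurable hM)
    ((integrable_logKernel_zero y).bdd_mul hn.aestronglyMeasurable hN)

theorem signedLogEnergy_eq_integral_mul_logPotential {s : SignedMeasure S2}
    (hpos : s.toJordanDecomposition.posPart ≤ (C : ℝ≥0∞) • sigma2)
    (hneg : s.toJordanDecomposition.negPart ≤ (D : ℝ≥0∞) • sigma2) :
    signedLogEnergy s =
      ∫ x, s.rnDeriv sigma2 x * logPotential 0 (s.rnDeriv sigma2) x ∂sigma2 := by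
  have hpos_ac := Measure.absolutelyContinuous_of_le_smul hpos
  have hneg_ac := Measure.absolutelyContinuous_of_le_smul hneg
  let p (x : S2) : ℝ := (s.toJordanDecomposition.posPart.rnDeriv sigma2 x).toReal
  let n (x : S2) : ℝ := (s.toJordanDecomposition.negPart.rnDeriv sigma2 x).toReal
  have hp : Integrable p sigma2 := Measure.integrable_toReal_rnDeriv
  have hn : Integrable n sigma2 := Measure.integrable_toReal_rnDeriv
  have hpC : ∀ᵐ x ∂sigma2, |p x| ≤ C := by
    simpa [p] using ae_toReal_rnDeriv_le_of_le_smul hpos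
  have hnD : ∀ᵐ x ∂sigma2, |n x| ≤ D := by
    simpa [n] using ae_toReal_rnDeriv_le_of_le_smul hneg
  have hp_cont := continuous_logPotential_zero hp hpC
  have hn_cont := continuous_logPotential_zero hn hnD
  have hsub (x : S2) : logPotential 0 (s.rnDeriv sigma2) x =
      logPotential 0 p x - logPotential 0 n x := logPotential_zero_sub hp hpC hn hnD x
  have henergy : signedLogEnergy s =
      (∫ x, logPotential 0 p x ∂s.toJordanDecomposition.posPart -
        ∫ x, logPotential 0 p x ∂s.toJordanDecomposition.negPart) -
      (∫ x, logPotential 0 n x ∂s.toJordanDecomposition.posPart -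
        ∫ x, logPotential 0 n x ∂s.toJordanDecomposition.negPart) := by
    simp only [signedLogEnergy, integral_G_eq_logPotential hpos_ac,
      integral_G_eq_logPotential hneg_ac, p, n]
    ring
  have hs_meas : AEStronglyMeasurable (s.rnDeriv sigma2) sigma2 :=
    (s.integrable_rnDeriv sigma2).aestronglyMeasurable
  have hs_le := ae_abs_signedMeasure_rnDeriv_le hpos hneg
  have hint {g : S2 → ℝ} (hg : Continuous g) :=
    integral_posPart_sub_integral_negPart_eq_integral_rnDeriv_mul hpos_ac hneg_ac
      (integrable_of_continuous hg) (integrable_of_continuous hg)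
  rw [henergy, hint hp_cont, hint hn_cont,
    ← integral_sub ((integrable_of_continuous hp_cont).bdd_mul hs_meas hs_le)
      ((integrable_of_continuous hn_cont).bdd_mul hs_meas hs_le)]
  simp only [hsub, mul_sub]

theorem sq_integral_sub_le_two_mul_signedLogEnergy {s : SignedMeasure S2}
    (hpos : s.toJordanDecomposition.posPart ≤ (C : ℝ≥0∞) • sigma2)
    (hneg : s.toJordanDecomposition.negPart ≤ (D : ℝ≥0∞) • sigma2) (hs : s univ = 0)
    {f : S2 → ℝ} (hf : ∀ x y : S2, |f x - f y| ≤ dg x y) :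
    (∫ x, f x ∂s.toJordanDecomposition.posPart - ∫ x, f x ∂s.toJordanDecomposition.negPart) ^ 2 ≤
      2 * signedLogEnergy s := by
  have hpos_ac := Measure.absolutelyContinuous_of_le_smul hpos
  have hneg_ac := Measure.absolutelyContinuous_of_le_smul hneg
  have hint {g : S2 → ℝ} (hg : Continuous g) :=
    integral_posPart_sub_integral_negPart_eq_integral_rnDeriv_mul hpos_ac hneg_ac
      (integrable_of_continuous hg) (integrable_of_continuous hg)
  have hmean : ∫ x, s.rnDeriv sigma2 x ∂sigma2 = 0 := by
    have hJordan : s.toJordanDecomposition.posPart.real univ -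
        s.toJordanDecomposition.negPart.real univ = 0 := by
      rw [← hs]
      nth_rw 3 [← s.toSignedMeasure_toJordanDecomposition]
      simp [JordanDecomposition.toSignedMeasure]
    simpa [hJordan] using (hint continuous_one).symm
  rw [hint (continuous_of_abs_sub_le_dg hf),
    signedLogEnergy_eq_integral_mul_logPotential hpos hneg]
  exact sq_integral_mul_le_of_abs_sub_le_dg (s.integrable_rnDeriv sigma2)
    (ae_abs_signedMeasure_rnDeriv_le hpos hneg) hmean hf

end Energy

theorem lipschitz_test_le_energy_general (ν ρ : Measure S2) [IsFiniteMeasure ν]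
    [IsFiniteMeasure ρ] (hmass : ν univ = ρ univ) (hν : ∃ C : NNReal, ν ≤ (C : ENNReal) • sigma2)
    (hρ : ∃ C : NNReal, ρ ≤ (C : ENNReal) • sigma2) (f : S2 → ℝ)
    (hf : ∀ x y : S2, |f x - f y| ≤ dg x y) :
    ((∫ x, f x ∂ν) - ∫ x, f x ∂ρ) ^ 2 ≤
      2 * signedLogEnergy (ν.toSignedMeasure - ρ.toSignedMeasure) := by
  obtain ⟨C, hC⟩ := hν
  obtain ⟨D, hD⟩ := hρ
  have hmean : (ν.toSignedMeasure - ρ.toSignedMeasure) univ = 0 := by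
    simp [measureReal_def, hmass]
  have hf_int (P : Measure S2) [IsFiniteMeasure P] : Integrable f P :=
    integrable_of_continuous (continuous_of_abs_sub_le_dg hf)
  rw [← integral_posPart_sub_integral_negPart_toSignedMeasure_sub (hf_int ν) (hf_int ρ)]
  exact sq_integral_sub_le_two_mul_signedLogEnergy
    ((posPart_toSignedMeasure_sub_le ν ρ).trans hC)
    ((negPart_toSignedMeasure_sub_le ν ρ).trans hD) hmean hf

/-- Wasserstein-type bound: for a probability measure `ν` with bounded density w.r.t. `σ`
such that `μ = ν − σ` has finite logarithmic energy, and any 1-Lipschitz (w.r.t. the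
geodesic distance) function `f`, one has `(∫ f dν − ∫ f dσ)² ≤ 2·I(μ)`. -/
theorem lipschitz_test_le_energy (ν : Measure S2) [IsProbabilityMeasure ν]
    (hbdd : ∃ C : NNReal, ν ≤ (C : ENNReal) • sigma2)
    (μ : SignedMeasure S2) (hμ : μ = ν.toSignedMeasure - sigma2.toSignedMeasure)
    (hfin : Integrable (fun p : S2 × S2 => Real.log (1 / dist p.1 p.2))
      (μ.totalVariation.prod μ.totalVariation))
    (f : S2 → ℝ) (hf : ∀ x y : S2, |f x - f y| ≤ dg x y) :
    ((∫ x, f x ∂ν) - ∫ x, f x ∂sigma2) ^ 2 ≤ 2 * signedLogEnergy μ := by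
  subst hμ
  exact lipschitz_test_le_energy_general ν sigma2 (by simp) hbdd ⟨1, by simp⟩ f hf
end
end
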